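/- For all 0 < ε, δ ≤ 1 there exists C > 0 such that, for p ≥ C log n / n, the binomial random graph G = G_{n,p} asymptotically almost surely satisfies the following: for every H ∈ H^{2ε}_{n,p}(G), the graph G ∖ H contains a subgraph with at most δn²p edges that satisfies property RE(1/2 + ε/4). -/

import Mathlib

/-!
A random subgraph of `G_{n,p}` of density `δ` is a `G_{n,pδ}`, whose law does not depend on `H`. So
any property of `G_{n,pδ}` which is inherited by subgraphs holds for a random subgraph `R` of
density `δ` of `G ∖ H`, for all `H` at once. Two such properties suffice: a small set does not send
many edges to a set of comparable size, and families of pairs described by a labelling of the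
vertices have density at most about `pδ`. The only other property needed is a lower bound on the
degrees of `R`, which turns the Pósa condition on `H` into one on `R`.

Let `P` be a longest path in `R ∪ P`, cut into `O(log n)` blocks. After `O(log n)` rotations all
but a small proportion of the blocks are still traversed contiguously, forwards or backwards, and
the direction of its block decides whether the neighbour `y` of an end `x` yields the predecessor or
the successor of `y` on `P` as an end of another path. Hence the edges of `R` leaving the current
set of ends are covered by a labelled family of pairs, whose size is controlled by the size of the
next set of ends. While small, the set of ends at least doubles with each rotation; afterwards the
Pósa condition on the degrees makes it grow by `εn/2` per rotation until it has size `(1/2 + ε/4)n`.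
-/

open Filter Real

namespace Resilience

variable {V : Type*}

/-- The degree of a vertex, as the cardinality of its neighbourhood. -/
noncomputable def deg (G : SimpleGraph V) (v : V) : ℕ := (G.neighborSet v).ncard

/-- The neighbourhood of a set of vertices: all vertices with a neighbour in `X`. -/
def nbhd (G : SimpleGraph V) (X : Set V) : Set V := {v | ∃ x ∈ X, G.Adj v x}

/-- The minimum degree over a set of vertices. -/
noncomputable def minDeg (G : SimpleGraph V) (X : Set V) : ℕ :=
  sInf ((fun v => deg G v) '' X)

/-- The number of edges of `G` with one endpoint in `X` and the other in `Y`. -/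
noncomputable def eBetween (G : SimpleGraph V) (X Y : Set V) : ℕ :=
  {e ∈ G.edgeSet | ∃ x ∈ X, ∃ y ∈ Y, e = s(x, y)}.ncard

/-- The number of edges of `G` with both endpoints in `A`. -/
noncomputable def eIn (G : SimpleGraph V) (A : Set V) : ℕ :=
  {e ∈ G.edgeSet | ∀ v ∈ e, v ∈ A}.ncard

/-- The graph on `V` whose edges are the consecutive pairs of the list `l`;
this lets us view a path, recorded as a list of distinct vertices, as a graph. -/
def listGraph (l : List V) : SimpleGraph V :=
  SimpleGraph.fromEdgeSet {e | ∃ q ∈ l.zip l.tail, e = s(q.1, q.2)}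

/-- `l` is a (nonempty) path on `V` all of whose edges lie in `G`. -/
def IsPathOn (G : SimpleGraph V) (l : List V) : Prop :=
  l ≠ [] ∧ l.Nodup ∧ l.Chain' G.Adj

/-- `l` is a longest path with all edges in `G`. -/
def IsLongestPathOn (G : SimpleGraph V) (l : List V) : Prop :=
  IsPathOn G l ∧ ∀ l' : List V, IsPathOn G l' → l'.length ≤ l.length

/-- `l'` is obtained from the path `l` (with fixed last endpoint) by a single rotation
within `G`, whose broken edge lies on the original path `P`.  Writing
`l = a :: t₁ ++ c :: b :: t₂`, the pivot is `b`, the new edge is `ab ∈ G`, the broken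
edge is `cb` (an edge of `P`), and the rotated path is `(a :: t₁ ++ [c]).reverse ++ b :: t₂`. -/
def IsRotation (G : SimpleGraph V) (P l l' : List V) : Prop :=
  ∃ (a c b : V) (t₁ t₂ : List V),
    l = a :: t₁ ++ c :: b :: t₂ ∧ G.Adj a b ∧ (listGraph P).Adj c b ∧
    l' = (a :: t₁ ++ [c]).reverse ++ b :: t₂

/-- The set of paths obtainable from `P` by at most `t` successive rotations within `G`
with fixed last endpoint, all broken edges lying on `P`. -/
def rotSet (G : SimpleGraph V) (P : List V) : ℕ → Set (List V)
  | 0 => {P}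
  | t + 1 => rotSet G P t ∪ {l' | ∃ l ∈ rotSet G P t, IsRotation G P l l'}

/-- `R^t_{G,P,u}`: the set of endpoints of paths obtainable from `P` by at most `t`
successive rotations within `G` with fixed last endpoint. -/
def Rset (G : SimpleGraph V) (P : List V) (t : ℕ) : Set V :=
  {x | ∃ l ∈ rotSet G P t, l.head? = some x}

/-- The family `H^ε_{n,p}` of Pósa-type subgraphs: there is an ordering of the vertices
with non-increasing degrees such that `d_H(v_i) ≤ (n-i)p - εnp` for all `i < n/2`
(1-based indexing). -/
def PosaFamily (n : ℕ) (p ε : ℝ) (H : SimpleGraph (Fin n)) : Prop :=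
  ∃ v : Fin n → Fin n, Function.Bijective v ∧
    (∀ i j : Fin n, i ≤ j → deg H (v j) ≤ deg H (v i)) ∧
    ∀ i : Fin n, ((i.1 : ℝ) + 1) < n / 2 →
      (deg H (v i) : ℝ) ≤ ((n : ℝ) - ((i.1 : ℝ) + 1)) * p - ε * n * p

/-- The family `H^{ε,δ}_{n,p}` of (shifted) Chvátal-type subgraphs, where the shift
`δn` is recorded as a natural number `s`: there is an ordering of the vertices with
non-increasing degrees such that for all `i < n/2` (1-based indexing), either
`d_H(v_i) ≤ (n-i)p - εnp` or `d_H(v_{n-i-s}) ≤ ip - εnp`. -/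
def ChvatalFamily (n : ℕ) (p ε : ℝ) (s : ℕ) (H : SimpleGraph (Fin n)) : Prop :=
  ∃ v : Fin n → Fin n, Function.Bijective v ∧
    (∀ i j : Fin n, i ≤ j → deg H (v j) ≤ deg H (v i)) ∧
    ∀ i : Fin n, ((i.1 : ℝ) + 1) < n / 2 →
      ((deg H (v i) : ℝ) ≤ ((n : ℝ) - ((i.1 : ℝ) + 1)) * p - ε * n * p ∨
       (deg H (v ⟨n - (i.1 + 1) - s - 1, by have := i.2; omega⟩) : ℝ) ≤
         ((i.1 : ℝ) + 1) * p - ε * n * p)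

/-- The probability weight of a fixed graph `G` in the binomial random graph `G_{n,p}`. -/
noncomputable def weight (n : ℕ) (p : ℝ) (G : SimpleGraph (Fin n)) : ℝ :=
  p ^ G.edgeSet.ncard * (1 - p) ^ (n.choose 2 - G.edgeSet.ncard)

open Classical in
/-- The probability that the binomial random graph `G_{n,p}` satisfies the property `Q`. -/
noncomputable def Pr (n : ℕ) (p : ℝ) (Q : SimpleGraph (Fin n) → Prop) : ℝ :=
  ∑ G : SimpleGraph (Fin n), if Q G then weight n p G else 0

/-- Property `RE(δ)` for a (connected) graph `G` on `n` vertices: for every path `P`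
on the vertex set, either `G ∪ P` has a longer path, or there are at least `δn` vertices
`v`, each with a set `T v` of at least `δn` vertices `w`, such that `G ∪ P` has a path
from `v` to `w` with the same vertex set as `P`. -/
def RE (n : ℕ) (δ : ℝ) (G : SimpleGraph (Fin n)) : Prop :=
  G.Connected ∧
  ∀ P : List (Fin n), P ≠ [] → P.Nodup →
    (∃ Q : List (Fin n), IsPathOn (G ⊔ listGraph P) Q ∧ P.length < Q.length) ∨
    (∃ S : Set (Fin n), δ * n ≤ S.ncard ∧
      ∃ T : Fin n → Set (Fin n), (∀ v ∈ S, δ * n ≤ (T v).ncard) ∧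
        ∀ v ∈ S, ∀ w ∈ T v, ∃ Q : List (Fin n),
          IsPathOn (G ⊔ listGraph P) Q ∧ Q.head? = some v ∧ Q.getLast? = some w ∧
          Q.toFinset = P.toFinset)

/-- `G₂` complements `G₁` (with respect to parameter `δ` as in `RE(δ)`): for every path
`P` on the vertex set, either `G₁ ∪ P` has a longer path, or there are sets `S`, `T v`
as in the definition of `RE(δ)` together with `v ∈ S` and `w ∈ T v` such that `vw` is an
edge of `G₁ ∪ G₂`. -/
def Complements (n : ℕ) (δ : ℝ) (G₁ G₂ : SimpleGraph (Fin n)) : Prop :=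
  ∀ P : List (Fin n), P ≠ [] → P.Nodup →
    (∃ Q : List (Fin n), IsPathOn (G₁ ⊔ listGraph P) Q ∧ P.length < Q.length) ∨
    (∃ S : Set (Fin n), δ * n ≤ S.ncard ∧
      ∃ T : Fin n → Set (Fin n), (∀ v ∈ S, δ * n ≤ (T v).ncard) ∧
        (∀ v ∈ S, ∀ w ∈ T v, ∃ Q : List (Fin n),
          IsPathOn (G₁ ⊔ listGraph P) Q ∧ Q.head? = some v ∧ Q.getLast? = some w ∧
          Q.toFinset = P.toFinset) ∧
        ∃ v ∈ S, ∃ w ∈ T v, (G₁ ⊔ G₂).Adj v w)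


/-! ### Rotations of a path -/

section Rotations

variable {G F : SimpleGraph V} {P l l' : List V} {t : ℕ}

theorem isChain_listGraph (hP : P.Nodup) : P.IsChain (listGraph P).Adj := by
  rw [List.isChain_iff_getElem]
  refine fun i hi ↦ (SimpleGraph.fromEdgeSet_adj _).2 ⟨⟨(P[i], P[i + 1]), ?_, rfl⟩, fun h ↦ ?_⟩
  · exact List.mem_iff_getElem.2 ⟨i, by simp; omega, by simp⟩
  · have := hP.getElem_inj_iff.1 h
    omega

theorem IsRotation.exists_eq_append (h : IsRotation G P l l') :
    ∃ (A B : List V) (a b c : V), l = A ++ b :: B ∧ l' = A.reverse ++ b :: B ∧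
      A.head? = some a ∧ A.getLast? = some c ∧ G.Adj a b := by
  obtain ⟨a, c, b, t₁, t₂, rfl, hab, -, rfl⟩ := h
  exact ⟨a :: t₁ ++ [c], t₂, a, b, c, by simp, rfl, rfl, List.getLast?_concat, hab⟩

theorem IsRotation.perm (h : IsRotation G P l l') : l'.Perm l := by
  obtain ⟨A, B, a, b, c, rfl, rfl, -, -, -⟩ := h.exists_eq_append
  exact (List.reverse_perm _).append_right _

theorem IsRotation.getLast?_eq (h : IsRotation G P l l') : l'.getLast? = l.getLast? := by
  obtain ⟨A, B, a, b, c, rfl, rfl, -, -, -⟩ := h.exists_eq_append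
  rw [List.getLast?_append_of_ne_nil _ (by simp), List.getLast?_append_of_ne_nil _ (by simp)]

theorem IsRotation.isChain (h : IsRotation G P l l') (hG : G ≤ F) (hl : l.IsChain F.Adj) :
    l'.IsChain F.Adj := by
  obtain ⟨A, B, a, b, c, rfl, rfl, ha, -, hab⟩ := h.exists_eq_append
  rw [List.isChain_append] at hl
  refine List.IsChain.append ?_ hl.2.1 ?_
  · exact List.isChain_reverse.2 (hl.1.imp fun _ _ h ↦ h.symm)
  · simpa [ha] using hG hab

/-- The path is only cut in front of the pivot, so a segment avoiding the new head is either
kept or reversed as a whole. -/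
theorem IsRotation.exists_head (h : IsRotation G P l l') :
    ∃ c, l'.head? = some c ∧ ∀ I, c ∉ I → I <:+: l → I <:+: l' ∨ I.reverse <:+: l' := by
  obtain ⟨A, B, a, b, c, rfl, rfl, -, hc, -⟩ := h.exists_eq_append
  refine ⟨c, by simp [hc], fun I hcI hI ↦ ?_⟩
  rcases List.infix_append_iff_ne_nil.1 hI with hI | hI | ⟨I₁, I₂, hI₁, -, rfl, ⟨s, rfl⟩, -⟩
  · exact .inr ((List.reverse_infix.2 hI).trans List.infix_append_left)
  · exact .inl (hI.trans List.infix_append_right)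
  · rw [List.getLast?_append_of_ne_nil _ hI₁] at hc
    exact absurd (List.mem_append_left _ (List.mem_of_getLast? hc)) hcI

theorem self_mem_rotSet (G : SimpleGraph V) (P : List V) : ∀ t, P ∈ rotSet G P t
  | 0 => rfl
  | t + 1 => .inl (self_mem_rotSet G P t)

theorem rotSet_mono : Monotone (rotSet G P) :=
  monotone_nat_of_le_succ fun _ ↦ Set.subset_union_left

theorem Rset_mono : Monotone (Rset G P) :=
  fun _ _ hst _ ⟨l, hl, hx⟩ ↦ ⟨l, rotSet_mono hst hl, hx⟩

theorem rotSet_induction {motive : List V → Prop} (self : motive P)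
    (rotation : ∀ l l', motive l → IsRotation G P l l' → motive l') (hl : l ∈ rotSet G P t) :
    motive l := by
  induction t generalizing l with
  | zero => exact (show l = P from hl) ▸ self
  | succ t ih =>
    rcases hl with hl | ⟨l₀, hl₀, h⟩
    exacts [ih hl, rotation _ _ (ih hl₀) h]

theorem perm_of_mem_rotSet (hl : l ∈ rotSet G P t) : l.Perm P :=
  rotSet_induction (motive := (·.Perm P)) (.refl _) (fun _ _ ih h ↦ h.perm.trans ih) hl

theorem getLast?_of_mem_rotSet (hl : l ∈ rotSet G P t) : l.getLast? = P.getLast? :=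
  rotSet_induction (motive := (·.getLast? = P.getLast?)) rfl
    (fun _ _ ih h ↦ h.getLast?_eq.trans ih) hl

theorem isChain_of_mem_rotSet (hG : G ≤ F) (hP : P.IsChain F.Adj) (hl : l ∈ rotSet G P t) :
    l.IsChain F.Adj :=
  rotSet_induction hP (fun _ _ ih h ↦ h.isChain hG ih) hl

/-- The set `D` consists of the heads created on the way to `l`: a segment of `P` avoiding them
is never cut. -/
theorem exists_infix_of_mem_rotSet (hl : l ∈ rotSet G P t) :
    ∃ D : Finset V, D.card ≤ t ∧ ↑D ⊆ Rset G P t ∧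
      ∀ I, I <:+: P → (∀ d ∈ D, d ∉ I) → I <:+: l ∨ I.reverse <:+: l := by
  classical
  induction t generalizing l with
  | zero => exact ⟨∅, by simp, by simp, fun I hI _ ↦ .inl ((show l = P from hl) ▸ hI)⟩
  | succ t ih =>
    rcases hl with hl | ⟨l₀, hl₀, h⟩
    · obtain ⟨D, hcard, hD, hI⟩ := ih hl
      exact ⟨D, by omega, hD.trans (Rset_mono t.le_succ), hI⟩
    · obtain ⟨D, hcard, hD, hI⟩ := ih hl₀
      obtain ⟨c, hc, hrot⟩ := h.exists_head
      refine ⟨insert c D, (Finset.card_insert_le _ _).trans (by omega), ?_, fun I hIP hID ↦ ?_⟩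
      · rw [Finset.coe_insert, Set.insert_subset_iff]
        exact ⟨⟨l, .inr ⟨l₀, hl₀, h⟩, hc⟩, hD.trans (Rset_mono t.le_succ)⟩
      · have hcI : c ∉ I := hID c (Finset.mem_insert_self _ _)
        rcases hI I hIP fun d hd ↦ hID d (Finset.mem_insert_of_mem hd) with hl₀ | hl₀
        · exact hrot I hcI hl₀
        · simpa [or_comm] using hrot I.reverse (by simpa using hcI) hl₀

theorem mem_Rset_succ {x y c : V} (hl : l ∈ rotSet G P t) (hx : l.head? = some x)
    (hxy : G.Adj x y) (hcy : (listGraph P).Adj c y) (hinfix : [c, y] <:+: l) :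
    c ∈ Rset G P (t + 1) := by
  obtain ⟨s, u, rfl⟩ := hinfix
  cases s with
  | nil => exact Rset_mono t.le_succ ⟨_, hl, rfl⟩
  | cons a s =>
    obtain rfl : a = x := by simpa using hx
    exact ⟨_, .inr ⟨_, hl, a, c, y, s, u, by simp, hxy, hcy, rfl⟩, by simp⟩

theorem isPathOn_of_mem_rotSet (hG : G ≤ F) (hP : IsPathOn F P) (hl : l ∈ rotSet G P t) :
    IsPathOn F l := by
  have hperm := perm_of_mem_rotSet hl
  refine ⟨fun h ↦ hP.1 ?_, hperm.nodup_iff.2 hP.2.1, isChain_of_mem_rotSet hG hP.2.2 hl⟩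
  exact List.nil_perm.1 (h ▸ hperm)

theorem mem_of_adj_head {x y : V} (hG : G ≤ F) (hP : IsLongestPathOn F P)
    (hl : l ∈ rotSet G P t) (hx : l.head? = some x) (hxy : G.Adj x y) : y ∈ P := by
  have hperm := perm_of_mem_rotSet hl
  obtain ⟨-, hnodup, hchain⟩ := isPathOn_of_mem_rotSet hG hP.1 hl
  by_contra hy
  have hpath : IsPathOn F (y :: l) := by
    refine ⟨by simp, List.nodup_cons.2 ⟨fun h ↦ hy (hperm.mem_iff.1 h), hnodup⟩,
      List.isChain_cons.2 ⟨fun z hz ↦ ?_, hchain⟩⟩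
    obtain rfl : x = z := by simpa [hx] using hz
    exact hG hxy.symm
  have := hP.2 _ hpath
  rw [List.length_cons, hperm.length_eq] at this
  omega

end Rotations

section Positions

variable {G F : SimpleGraph V} {P l : List V} {S : Set V} {t : ℕ}

open Classical in
/-- The indices at which the list `P` visits the set `S`. -/
noncomputable def positions (P : List V) (S : Set V) : Finset ℕ :=
  {i ∈ Finset.range P.length | ∃ z ∈ S, P[i]? = some z}

theorem mem_positions {i : ℕ} : i ∈ positions P S ↔ ∃ h : i < P.length, P[i] ∈ S := by
  simp [positions, List.getElem?_eq_some_iff]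

theorem card_positions (hP : P.Nodup) : (positions P S).card = {y ∈ S | y ∈ P}.ncard := by
  rw [← Set.ncard_coe_finset]
  refine Set.ncard_congr (fun i hi ↦ P[i]'(mem_positions.1 hi).1) (fun i hi ↦ ?_)
    (fun i j hi hj hij ↦ hP.getElem_inj_iff.1 hij) (fun y hy ↦ ?_)
  · exact ⟨(mem_positions.1 hi).2, List.getElem_mem _⟩
  · obtain ⟨i, hi, rfl⟩ := List.mem_iff_getElem.1 hy.2
    exact ⟨i, mem_positions.2 ⟨hi, hy.1⟩, rfl⟩

theorem card_positions_le [Finite V] (hP : P.Nodup) : (positions P S).card ≤ S.ncard :=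
  (card_positions hP).trans_le (Set.ncard_le_ncard (Set.sep_subset _ _))

theorem take_drop_infix (P : List V) (a b : ℕ) : (P.drop a).take b <:+: P :=
  (List.take_prefix _ _).isInfix.trans (List.drop_suffix _ _).isInfix

theorem pair_infix_take_drop {a b i : ℕ} (ha : a ≤ i) (hb : i + 1 < a + b)
    (hi : i + 1 < P.length) : [P[i], P[i + 1]] <:+: (P.drop a).take b := by
  have hsub : (((P.drop a).take b).drop (i - a)).take 2 = [P[i], P[i + 1]] := by
    refine List.ext_getElem (by simp; omega) fun j hj hj' ↦ ?_
    have : j < 2 := hj'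
    simp only [List.getElem_take, List.getElem_drop]
    interval_cases j <;> simp <;> congr 1 <;> omega
  exact hsub ▸ take_drop_infix _ _ _

theorem mem_take_drop_iff {a b : ℕ} {d : V} :
    d ∈ (P.drop a).take b ↔ ∃ i, ∃ h : i < P.length, a ≤ i ∧ i < a + b ∧ P[i] = d := by
  rw [List.mem_iff_getElem]
  constructor
  · rintro ⟨j, hj, rfl⟩
    simp only [List.length_take, List.length_drop, lt_min_iff] at hj
    exact ⟨a + j, by omega, by omega, by omega, by simp⟩
  · rintro ⟨i, hi, ha, hb, rfl⟩
    exact ⟨i - a, by simp; omega, by simp [Nat.add_sub_cancel' ha]⟩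

/-- The vertex preceding a neighbour of the head is the next head.  On a segment of `P`
traversed forwards it is the predecessor along `P`. -/
theorem pred_mem_positions_Rset {x : V} {I : List V} {i : ℕ} (hP : P.Nodup)
    (hl : l ∈ rotSet G P t) (hx : l.head? = some x) (hi : i + 1 < P.length)
    (hxy : G.Adj x P[i + 1]) (hI : [P[i], P[i + 1]] <:+: I) (hIl : I <:+: l) :
    i ∈ positions P (Rset G P (t + 1)) :=
  mem_positions.2 ⟨by omega, mem_Rset_succ hl hx hxy
    (List.isChain_iff_getElem.1 (isChain_listGraph hP) i hi) (hI.trans hIl)⟩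

theorem succ_mem_positions_Rset {x : V} {I : List V} {i : ℕ} (hP : P.Nodup)
    (hl : l ∈ rotSet G P t) (hx : l.head? = some x) (hi : i + 1 < P.length)
    (hxy : G.Adj x P[i]) (hI : [P[i], P[i + 1]] <:+: I) (hIl : I.reverse <:+: l) :
    i + 1 ∈ positions P (Rset G P (t + 1)) :=
  mem_positions.2 ⟨hi, mem_Rset_succ hl hx hxy
    (List.isChain_iff_getElem.1 (isChain_listGraph hP) i hi).symm
    ((List.reverse_infix.2 hI).trans hIl)⟩

theorem positions_nbhd_Rset (hP : P.Nodup) {i : ℕ}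
    (hi : i ∈ positions P (nbhd G (Rset G P t))) :
    i + 1 = P.length ∨ i ∈ positions P (Rset G P (t + 1)) ∨
      i + 1 ∈ positions P (Rset G P (t + 1)) ∨
      ∃ j ∈ positions P (Rset G P (t + 1)), j + 1 = i := by
  obtain ⟨hlen, x, ⟨l, hl, hx⟩, hyx⟩ := mem_positions.1 hi
  obtain ⟨D, -, hD, hinfix⟩ := exists_infix_of_mem_rotSet hl
  have hDpos : ∀ j (hj : j < P.length), P[j] ∈ D → j ∈ positions P (Rset G P (t + 1)) :=
    fun j hj hd ↦ mem_positions.2 ⟨hj, Rset_mono t.le_succ (hD hd)⟩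
  rcases i with _ | i
  · refine .inr (.inl (mem_positions.2 ⟨hlen, P, self_mem_rotSet G P _, ?_⟩))
    rw [List.head?_eq_getElem?, List.getElem?_eq_getElem hlen]
  by_cases hlast : i + 1 + 1 = P.length
  · exact .inl hlast
  by_cases hmem : ∃ d ∈ D, d ∈ (P.drop i).take 3
  · obtain ⟨d, hd, hdP⟩ := hmem
    obtain ⟨j, hj, h₁, h₂, rfl⟩ := mem_take_drop_iff.1 hdP
    have hjpos := hDpos j hj hd
    obtain rfl | rfl | rfl : j = i ∨ j = i + 1 ∨ j = i + 1 + 1 := by omega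
    exacts [.inr (.inr (.inr ⟨_, hjpos, rfl⟩)), .inr (.inl hjpos), .inr (.inr (.inl hjpos))]
  · push Not at hmem
    rcases hinfix _ (take_drop_infix P i 3) hmem with hIl | hIl
    · exact .inr (.inr (.inr ⟨i, pred_mem_positions_Rset hP hl hx (by omega) hyx.symm
        (pair_infix_take_drop (by omega) (by omega) (by omega)) hIl, rfl⟩))
    · exact .inr (.inr (.inl (succ_mem_positions_Rset hP hl hx (by omega) hyx.symm
        (pair_infix_take_drop (by omega) (by omega) (by omega)) hIl)))

/-- Pósa's lemma; the summand `1` accounts for the last vertex of `P`. -/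
theorem ncard_nbhd_Rset_le [Finite V] (hG : G ≤ F) (hP : IsLongestPathOn F P) :
    (nbhd G (Rset G P t)).ncard ≤ 3 * (Rset G P (t + 1)).ncard + 1 := by
  have hnodup : P.Nodup := hP.1.2.1
  set J := positions P (Rset G P (t + 1))
  have hon : {y ∈ nbhd G (Rset G P t) | y ∈ P} = nbhd G (Rset G P t) :=
    Set.sep_eq_self_iff_mem_true.2 fun y ⟨_, ⟨_, hl, hx⟩, hyx⟩ ↦
      mem_of_adj_head hG hP hl hx hyx.symm
  have hsub : positions P (nbhd G (Rset G P t)) ⊆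
      {P.length - 1} ∪ (J ∪ (J.image (· - 1) ∪ J.image (· + 1))) := by
    intro i hi
    simp only [Finset.mem_union, Finset.mem_singleton, Finset.mem_image]
    rcases positions_nbhd_Rset hnodup hi with h | h | h | h
    exacts [.inl (by omega), .inr (.inl h), .inr (.inr (.inl ⟨_, h, rfl⟩)), .inr (.inr (.inr h))]
  have hJ : J.card ≤ (Rset G P (t + 1)).ncard := card_positions_le hnodup
  calc (nbhd G (Rset G P t)).ncard = (positions P (nbhd G (Rset G P t))).card := by
        rw [card_positions hnodup, hon]
    _ ≤ 1 + (J.card + (J.card + J.card)) := by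
        refine (Finset.card_le_card hsub).trans ((Finset.card_union_le _ _).trans ?_)
        gcongr
        · exact (Finset.card_singleton _).le
        refine (Finset.card_union_le _ _).trans (add_le_add_right ?_ _)
        exact (Finset.card_union_le _ _).trans
          (add_le_add Finset.card_image_le Finset.card_image_le)
    _ ≤ _ := by omega

end Positions

/-! ### Blocks of the path -/

section Blocks

open Finset

variable {G F : SimpleGraph V} {P l : List V} {T : Finset ℕ} {m k L t : ℕ}

/-- Admissibility of the position `i` on a path of length `m`, cut into blocks of length `L`, for
a neighbour of the head after some rotations, if `T` is the set of positions of the next heads.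
The option records how the block of `i` is now traversed: forwards (`some true`), backwards
(`some false`), or not contiguously (`none`). -/
def Compatible (T : Finset ℕ) (m L : ℕ) : Option Bool → ℕ → Prop
  | none, _ => True
  | some true, i => i % L = 0 ∨ i - 1 ∈ T
  | some false, i => (i + 1) % L = 0 ∨ i + 1 = m ∨ i + 1 ∈ T

theorem add_one_div_eq_of_mod_ne {i : ℕ} (h : (i + 1) % L ≠ 0) : (i + 1) / L = i / L := by
  rw [Nat.succ_div, if_neg (mt Nat.mod_eq_zero_of_dvd h), add_zero]

theorem sub_one_div_eq_of_mod_ne {i : ℕ} (h : i % L ≠ 0) : (i - 1) / L = i / L := by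
  obtain ⟨i, rfl⟩ := Nat.exists_eq_add_one_of_ne_zero (fun hi : i = 0 ↦ h (by simp [hi]))
  exact (add_one_div_eq_of_mod_ne h).symm

theorem eq_of_add_one_mod_eq_zero {i : ℕ} (hL : 0 < L) (h : (i + 1) % L = 0) :
    i = i / L * L + L - 1 := by
  have hlt := Nat.mod_lt i hL
  have hmod : i % L + 1 = L := by
    by_contra hne
    rw [← Nat.mod_add_mod, Nat.mod_eq_of_lt (by omega)] at h
    omega
  have := Nat.div_add_mod' i L
  omega

open Classical in
theorem forward_block_subset (T : Finset ℕ) (m L j : ℕ) :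
    {i ∈ range m | i / L = j ∧ Compatible T m L (some true) i} ⊆
      {i ∈ T | i / L = j}.image (· + 1) ∪ {j * L} := by
  intro i hi
  obtain ⟨-, hj, h⟩ := mem_filter.1 hi
  by_cases h0 : i % L = 0
  · simp [← hj, Nat.div_mul_cancel (Nat.dvd_of_mod_eq_zero h0)]
  · exact mem_union_left _ (mem_image.2 ⟨i - 1, mem_filter.2 ⟨h.resolve_left h0,
      (sub_one_div_eq_of_mod_ne h0).trans hj⟩,
      Nat.sub_add_cancel (Nat.pos_of_ne_zero fun hi ↦ h0 (by simp [hi]))⟩)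

open Classical in
theorem backward_block_subset (hL : 0 < L) (T : Finset ℕ) (m j : ℕ) :
    {i ∈ range m | i / L = j ∧ Compatible T m L (some false) i} ⊆
      {i ∈ T | i / L = j}.image (· - 1) ∪ {j * L + L - 1, m - 1} := by
  intro i hi
  obtain ⟨-, hj, h⟩ := mem_filter.1 hi
  by_cases h0 : (i + 1) % L = 0
  · simp [← hj, ← eq_of_add_one_mod_eq_zero hL h0]
  rcases h.resolve_left h0 with rfl | h
  · simp
  · exact mem_union_left _ (mem_image.2
      ⟨i + 1, mem_filter.2 ⟨h, (add_one_div_eq_of_mod_ne h0).trans hj⟩, rfl⟩)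

open Classical in
theorem card_compatible_block_le (hL : 0 < L) (o : Option Bool) (j : ℕ) :
    #{i ∈ range m | i / L = j ∧ Compatible T m L o i} ≤
      #{i ∈ T | i / L = j} + 2 + if o = none then L else 0 := by
  have hcover : ∀ {f : ℕ → ℕ} {E : Finset ℕ}, #E ≤ 2 →
      {i ∈ range m | i / L = j ∧ Compatible T m L o i} ⊆ {i ∈ T | i / L = j}.image f ∪ E →
      #{i ∈ range m | i / L = j ∧ Compatible T m L o i} ≤ #{i ∈ T | i / L = j} + 2 :=
    fun hE h ↦ (card_le_card h).trans ((card_union_le _ _).trans (add_le_add card_image_le hE))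
  rcases o with _ | _ | _
  · have hsub : {i ∈ range m | i / L = j ∧ Compatible T m L none i} ⊆ Ico (j * L) (j * L + L) := by
      intro i hi
      obtain ⟨-, rfl, -⟩ := mem_filter.1 hi
      exact mem_Ico.2 ⟨Nat.div_mul_le_self i L, by
        simpa [add_mul] using Nat.lt_mul_of_div_lt (Nat.lt_add_one (i / L)) hL⟩
    simpa using (card_le_card hsub).trans (by simp)
  · exact (hcover card_le_two (backward_block_subset hL T m j)).trans (by simp)
  · exact (hcover (by simp) (forward_block_subset T m L j)).trans (by simp)

open Classical in
theorem card_compatible_le (hm : m ≤ k * L) (σ : ℕ → Option Bool) :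
    #{i ∈ range m | Compatible T m L (σ (i / L)) i} ≤
      #T + 2 * k + #{j ∈ range k | σ j = none} * L := by
  rcases Nat.eq_zero_or_pos L with rfl | hL
  · simp_all
  have hmaps : Set.MapsTo (· / L) (↑{i ∈ range m | Compatible T m L (σ (i / L)) i} : Set ℕ)
      (range k) := fun i hi ↦ by
    simp only [coe_filter, Finset.mem_range, Set.mem_ofPred_eq, coe_range, Set.mem_Iio] at hi ⊢
    exact Nat.div_lt_of_lt_mul (by rw [mul_comm]; omega)
  calc #{i ∈ range m | Compatible T m L (σ (i / L)) i}
      = ∑ j ∈ range k, #{i ∈ range m | i / L = j ∧ Compatible T m L (σ j) i} := by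
        rw [card_eq_sum_card_fiberwise hmaps]
        refine sum_congr rfl fun j _ ↦ congrArg card ?_
        ext i
        simp only [mem_filter]
        constructor
        · rintro ⟨⟨h₁, h₂⟩, rfl⟩
          exact ⟨h₁, rfl, h₂⟩
        · rintro ⟨h₁, rfl, h₂⟩
          exact ⟨⟨h₁, h₂⟩, rfl⟩
    _ ≤ ∑ j ∈ range k, (#{i ∈ T | i / L = j} + 2 + if σ j = none then L else 0) :=
        sum_le_sum fun j _ ↦ card_compatible_block_le hL _ j
    _ = #{i ∈ T | i / L ∈ range k} + 2 * k + #{j ∈ range k | σ j = none} * L := by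
        rw [sum_add_distrib, sum_add_distrib, sum_card_fiberwise_eq_card_filter, ← sum_filter]
        simp [mul_comm]
    _ ≤ _ := by gcongr; exact filter_subset _ _

/-- A block is traversed contiguously unless it contains one of the at most `t` heads created so
far; inside such a block the vertex in front of a neighbour of the head is the next head. -/
theorem exists_directions {x : V} (hP : P.Nodup) (hl : l ∈ rotSet G P t)
    (hx : l.head? = some x) (hL : 0 < L) :
    ∃ σ : ℕ → Option Bool, (∀ k, #{j ∈ range k | σ j = none} ≤ t) ∧
      ∀ i (hi : i < P.length), G.Adj x P[i] →
        Compatible (positions P (Rset G P (t + 1))) P.length L (σ (i / L)) i := by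
  classical
  obtain ⟨D, hcard, -, hinfix⟩ := exists_infix_of_mem_rotSet hl
  let block j := (P.drop (j * L)).take L
  let cut j : Prop := ∃ d ∈ D, d ∈ block j
  refine ⟨fun j ↦ if cut j then none else some (decide (block j <:+: l)), fun k ↦ ?_,
    fun i hi hxi ↦ ?_⟩
  · refine le_trans (card_le_card fun j hj ↦ ?_)
      (card_image_le.trans hcard : #(D.image fun d ↦ P.idxOf d / L) ≤ t)
    obtain ⟨d, hd, hdj⟩ : cut j := by simpa using (mem_filter.1 hj).2
    obtain ⟨i, hi, h₁, h₂, rfl⟩ := mem_take_drop_iff.1 hdj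
    refine mem_image.2 ⟨_, hd, ?_⟩
    rw [hP.idxOf_getElem, Nat.div_eq_of_lt_le h₁ (by linarith)]
  have hstart : i / L * L ≤ i := Nat.div_mul_le_self i L
  have hend : i < i / L * L + L := by
    simpa [add_mul] using Nat.lt_mul_of_div_lt (Nat.lt_add_one (i / L)) hL
  by_cases hcut : cut (i / L)
  · simp [hcut, Compatible]
  by_cases hfwd : block (i / L) <:+: l
  · simp only [hcut, hfwd, if_false, decide_true]
    refine or_iff_not_imp_left.2 fun h0 ↦ ?_
    obtain ⟨i, rfl⟩ := Nat.exists_eq_add_one_of_ne_zero (fun hi : i = 0 ↦ h0 (by simp [hi]))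
    have hne : (i + 1) / L * L ≠ i + 1 := fun h ↦ h0 (h ▸ Nat.mul_mod_left _ _)
    exact pred_mem_positions_Rset hP hl hx hi hxi
      (pair_infix_take_drop (by omega) hend hi) hfwd
  · simp only [hcut, hfwd, if_false, decide_false]
    refine or_iff_not_imp_left.2 fun h0 ↦ or_iff_not_imp_left.2 fun hm ↦ ?_
    have hne : i + 1 ≠ i / L * L + L := fun h ↦ h0 (by
      rw [h, ← add_one_mul, Nat.mul_mod_left])
    have hbwd := (hinfix _ (take_drop_infix P _ _) fun d hd hdI ↦
      hcut ⟨d, hd, hdI⟩).resolve_left hfwd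
    exact succ_mem_positions_Rset hP hl hx (by omega) hxi
      (pair_infix_take_drop hstart (by omega) (by omega)) hbwd

/-- The label of a vertex consists of the index of its block and of the directions of that block
with which it is compatible, so whether `y` may be adjacent to a head `x` depends only on `x` and
the label of `y`. -/
theorem exists_labelling [Finite V] (hG : G ≤ F) (hP : IsLongestPathOn F P) (hL : 0 < L)
    (hk : P.length ≤ k * L) (t : ℕ) :
    ∃ (ℓ : V → Fin (k + 1) × Set (Option Bool)) (Z : V → Set (Fin (k + 1) × Set (Option Bool))),
      ∀ x ∈ Rset G P t, (∀ y, G.Adj x y → ℓ y ∈ Z x) ∧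
        {y | ℓ y ∈ Z x}.ncard ≤ (Rset G P (t + 1)).ncard + 2 * k + t * L := by
  classical
  set T := positions P (Rset G P (t + 1))
  choose! l hl hx using fun x (hx : x ∈ Rset G P t) ↦ hx
  choose! σ hσ hcomp using fun x hx' ↦
    exists_directions (L := L) hP.1.2.1 (hl x hx') (hx x hx') hL
  have hidx : ∀ y, P.idxOf y / L < k + 1 := fun y ↦
    Nat.lt_succ_of_le (Nat.div_le_of_le_mul (by linarith [P.idxOf_le_length (a := y)]))
  let ℓ y : Fin (k + 1) × Set (Option Bool) := (⟨P.idxOf y / L, hidx y⟩,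
    {o | y ∈ P ∧ Compatible T P.length L o (P.idxOf y)})
  refine ⟨ℓ, fun x ↦ {z | σ x z.1 ∈ z.2}, fun x hxR ↦ ⟨fun y hxy ↦ ?_, ?_⟩⟩
  · have hyP : y ∈ P := mem_of_adj_head hG hP (hl x hxR) (hx x hxR) hxy
    exact ⟨hyP, hcomp x hxR _ (List.idxOf_lt_length_of_mem hyP) (by simpa using hxy)⟩
  have hle : {y | ℓ y ∈ {z : Fin (k + 1) × Set (Option Bool) | σ x z.1 ∈ z.2}}.ncard ≤
      #{i ∈ range P.length | Compatible T P.length L (σ x (i / L)) i} := by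
    rw [← Set.ncard_coe_finset]
    refine Set.ncard_le_ncard_of_injOn P.idxOf (fun y hy ↦ ?_) (fun y hy z _ h ↦ ?_)
    · simpa [List.idxOf_lt_length_iff.2 hy.1] using hy.2
    · exact (List.idxOf_inj hy.1).1 h
  refine hle.trans ((card_compatible_le hk (σ x)).trans ?_)
  gcongr
  exacts [card_positions_le hP.1.2.1, hσ x hxR k]

end Blocks

/-! ### Sparse graphs with few edges in labelled families of pairs -/

section UpperUniform

open Finset

variable {K : Type*} {r ε : ℝ} {G R : SimpleGraph V}

open Classical in
/-- The number of ordered pairs in `A` that are adjacent in `G`. -/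
noncomputable def adjPairs (G : SimpleGraph V) (A : Finset (V × V)) : ℕ :=
  #{z ∈ A | G.Adj z.1 z.2}

theorem adjPairs_mono (h : G ≤ R) (A : Finset (V × V)) : adjPairs G A ≤ adjPairs R A := by
  classical
  exact card_le_card (monotone_filter_right A fun _ _ hz ↦ h hz)

theorem adjPairs_product_univ [Fintype V] (G : SimpleGraph V) (S : Finset V) :
    adjPairs G (S ×ˢ univ) = ∑ x ∈ S, deg G x := by
  classical
  simp only [adjPairs, card_filter, sum_product]
  refine sum_congr rfl fun x _ ↦ ?_
  rw [← card_filter, deg, ← Set.ncard_coe_finset]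
  congr 1
  ext y
  simp

theorem sum_deg_le_adjPairs [Finite V] {S : Finset V} {A : Finset (V × V)}
    (hA : ∀ x ∈ S, ∀ y, G.Adj x y → (x, y) ∈ A) : ∑ x ∈ S, deg G x ≤ adjPairs G A := by
  classical
  have := Fintype.ofFinite V
  rw [← adjPairs_product_univ]
  refine card_le_card fun z hz ↦ ?_
  obtain ⟨hz, hadj⟩ := mem_filter.1 hz
  exact mem_filter.2 ⟨hA z.1 (mem_product.1 hz).1 z.2 hadj, hadj⟩

variable [Fintype V]

open Classical in
/-- Upper uniformity at density `r`: no small set `X` sends many edges to a set of size at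
most `7|X|`, and a family of pairs `(x, y)` described by a labelling of the vertices `y` and by
sets of admissible labels for the vertices `x` contains few edges in excess of the density `r`. -/
structure UpperUniform (K : Type*) (r ε : ℝ) (G : SimpleGraph V) : Prop where
  small : ∀ X Y : Finset V, X.Nonempty → 56 * (#X : ℝ) ≤ ε * Fintype.card V → #Y ≤ 7 * #X →
    (adjPairs G (X ×ˢ Y) : ℝ) < r * (ε * Fintype.card V) * #X
  labels : ∀ (ℓ : V → K) (Z : V → Set K), (adjPairs G {z | ℓ z.2 ∈ Z z.1} : ℝ) ≤
    r * #{z : V × V | ℓ z.2 ∈ Z z.1} + (ε / 32) ^ 2 * Fintype.card V ^ 2 * r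

theorem UpperUniform.mono (hR : R ≤ G) (h : UpperUniform K r ε G) : UpperUniform K r ε R where
  small X Y hX hXε hY := (Nat.cast_le.2 (adjPairs_mono hR _)).trans_lt (h.small X Y hX hXε hY)
  labels ℓ Z := (Nat.cast_le.2 (adjPairs_mono hR _)).trans (h.labels ℓ Z)

/-- Pósa's condition on the degrees, at density `r`. -/
def PosaDegrees (r ε : ℝ) (G : SimpleGraph V) : Prop :=
  ∀ s : ℝ, 0 ≤ s → s ≤ Fintype.card V / 2 →
    (#{v | (deg G v : ℝ) < r * (s + ε * Fintype.card V)} : ℝ) ≤ s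

theorem PosaDegrees.le_deg (h : PosaDegrees r ε G) (x : V) :
    r * (ε * Fintype.card V) ≤ deg G x := by
  by_contra! hx
  have hempty := h 0 le_rfl (by positivity)
  rw [zero_add, Nat.cast_nonpos, card_eq_zero, filter_eq_empty_iff] at hempty
  exact hempty (mem_univ x) hx

theorem PosaDegrees.card_filter_ge {s : ℝ} (h : PosaDegrees r ε G) (S : Finset V) (hs : 0 ≤ s)
    (hs' : s ≤ Fintype.card V / 2) :
    (#S : ℝ) ≤ #{v ∈ S | r * (s + ε * Fintype.card V) ≤ deg G v} + s := by
  rw [← card_filter_add_card_filter_not (s := S)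
    (fun v ↦ r * (s + ε * Fintype.card V) ≤ deg G v), Nat.cast_add]
  gcongr
  refine le_trans (Nat.cast_le.2 (card_le_card fun v hv ↦ ?_)) (h s hs hs')
  simpa using (mem_filter.1 hv).2

theorem UpperUniform.card_lt_ncard_nbhd {X : Set V} (hU : UpperUniform K r ε R)
    (hD : PosaDegrees r ε R) (hX : X.Nonempty)
    (hXε : 56 * (X.ncard : ℝ) ≤ ε * Fintype.card V) : 7 * X.ncard < (nbhd R X).ncard := by
  classical
  by_contra! hle
  rw [Set.ncard_eq_toFinset_card'] at hXε
  rw [Set.ncard_eq_toFinset_card', Set.ncard_eq_toFinset_card'] at hle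
  have hlow : r * (ε * Fintype.card V) * #X.toFinset ≤ ∑ x ∈ X.toFinset, (deg R x : ℝ) := by
    rw [mul_comm, ← nsmul_eq_mul]
    exact card_nsmul_le_sum _ _ _ fun x _ ↦ hD.le_deg x
  have hcover : ∑ x ∈ X.toFinset, deg R x ≤
      adjPairs R (X.toFinset ×ˢ (nbhd R X).toFinset) :=
    sum_deg_le_adjPairs fun x hx y hxy ↦ mem_product.2
      ⟨hx, Set.mem_toFinset.2 ⟨x, Set.mem_toFinset.1 hx, hxy.symm⟩⟩
  have := hU.small _ _ (Set.toFinset_nonempty.2 hX) hXε hle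
  have : ∑ x ∈ X.toFinset, (deg R x : ℝ) ≤ adjPairs R (X.toFinset ×ˢ (nbhd R X).toFinset) := by
    exact_mod_cast hcover
  linarith

theorem UpperUniform.sum_deg_le {ℓ : V → K} {Z : V → Set K} {S : Finset V} {B : ℝ}
    (hU : UpperUniform K r ε R) (hr : 0 ≤ r) (hcover : ∀ x ∈ S, ∀ y, R.Adj x y → ℓ y ∈ Z x)
    (hB : ∀ x ∈ S, ({y | ℓ y ∈ Z x}.ncard : ℝ) ≤ B) :
    ∑ x ∈ S, (deg R x : ℝ) ≤ r * (#S * B) + (ε / 32) ^ 2 * Fintype.card V ^ 2 * r := by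
  classical
  let Z' x : Set K := {k | x ∈ S ∧ k ∈ Z x}
  have hcard : (#{z : V × V | ℓ z.2 ∈ Z' z.1} : ℝ) ≤ #S * B := by
    have hsum : #{z : V × V | ℓ z.2 ∈ Z' z.1} = ∑ x ∈ S, {y | ℓ y ∈ Z x}.ncard := by
      rw [card_filter, ← univ_product_univ, sum_product, ← sum_subset (subset_univ S)]
      · refine sum_congr rfl fun x hx ↦ ?_
        rw [← card_filter, ← Set.ncard_coe_finset]
        simp [Z', hx]
      · intro x _ hx
        simp [Z', hx]
    rw [hsum, Nat.cast_sum, ← nsmul_eq_mul]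
    exact sum_le_card_nsmul _ _ _ hB
  calc ∑ x ∈ S, (deg R x : ℝ) ≤ (adjPairs R {z | ℓ z.2 ∈ Z' z.1} : ℝ) := by
        have := sum_deg_le_adjPairs (G := R) (S := S) (A := {z | ℓ z.2 ∈ Z' z.1})
          fun x hx y hxy ↦ mem_filter.2 ⟨mem_univ _, hx, hcover x hx y hxy⟩
        exact_mod_cast this
    _ ≤ r * #{z : V × V | ℓ z.2 ∈ Z' z.1} + (ε / 32) ^ 2 * Fintype.card V ^ 2 * r := by
        convert hU.labels ℓ Z'
    _ ≤ _ := by gcongr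

/-- Averaging: a linear part of `S` consists of vertices of degree about `r (|S| + ε n)`, so sets
described by labels that cover their neighbourhoods are larger than `S` by a linear amount. -/
theorem UpperUniform.le_of_cover {ℓ : V → K} {Z : V → Set K} {S : Set V} {B : ℝ} [Nonempty V]
    (hU : UpperUniform K r ε R) (hD : PosaDegrees r ε R) (hr : 0 < r) (hε : 0 < ε) (hε1 : ε ≤ 1)
    (hS : ε * Fintype.card V ≤ 56 * S.ncard) (hcover : ∀ x ∈ S, ∀ y, R.Adj x y → ℓ y ∈ Z x)
    (hB : ∀ x ∈ S, ({y | ℓ y ∈ Z x}.ncard : ℝ) ≤ B) :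
    min (S.ncard : ℝ) (Fintype.card V / 2) + 3 / 4 * ε * Fintype.card V ≤ B := by
  classical
  have hn : 0 < (Fintype.card V : ℝ) := by exact_mod_cast Fintype.card_pos
  set n : ℝ := (Fintype.card V : ℝ)
  rw [Set.ncard_eq_toFinset_card'] at hS ⊢
  set s : ℝ := min (#S.toFinset : ℝ) (n / 2) - ε / 112 * n with hs_def
  have hs0 : 0 ≤ s := sub_nonneg.2 (le_min (by linarith) (by nlinarith))
  have hs : s ≤ n / 2 := (sub_le_self _ (by positivity)).trans (min_le_right _ _)
  set S' : Finset V := {v ∈ S.toFinset | r * (s + ε * n) ≤ deg R v}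
  have hS' : ∀ x ∈ S', x ∈ S := fun x hx ↦ Set.mem_toFinset.1 (mem_filter.1 hx).1
  have hcard : ε / 112 * n ≤ #S' := by
    have : (#S.toFinset : ℝ) ≤ #S' + s := hD.card_filter_ge S.toFinset hs0 hs
    have := min_le_left (#S.toFinset : ℝ) (n / 2)
    linarith
  have hpos : (0 : ℝ) < #S' := lt_of_lt_of_le (by positivity) hcard
  have hlow : (#S' : ℝ) * (r * (s + ε * n)) ≤ ∑ x ∈ S', (deg R x : ℝ) := by
    rw [← nsmul_eq_mul]
    exact card_nsmul_le_sum _ _ _ fun x hx ↦ (mem_filter.1 hx).2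
  have hup := hU.sum_deg_le hr.le (fun x hx ↦ hcover x (hS' x hx)) fun x hx ↦ hB x (hS' x hx)
  have herr : (ε / 32) ^ 2 * n ^ 2 * r ≤ #S' * r * (ε / 8 * n) :=
    calc (ε / 32) ^ 2 * n ^ 2 * r ≤ ε / 112 * n * r * (ε / 8 * n) := by
          nlinarith [mul_pos (pow_pos (mul_pos hε hn) 2) hr]
      _ ≤ _ := by gcongr
  have : s + ε * n ≤ B + ε / 8 * n := by
    refine le_of_mul_le_mul_left (a := #S' * r) ?_ (by positivity)
    linarith
  have : 0 < ε * n := by positivity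
  linarith

/-- Every component has more than `n / 2` vertices: small components contradict the expansion,
and linear ones contradict the averaging, applied to the indicator labelling of the component. -/
theorem UpperUniform.lt_ncard_reachable [Nontrivial K] (hU : UpperUniform K r ε R)
    (hD : PosaDegrees r ε R) (hr : 0 < r) (hε : 0 < ε) (hε1 : ε ≤ 1) (u : V) :
    (Fintype.card V : ℝ) / 2 < {w | R.Reachable u w}.ncard := by
  classical
  have : Nonempty V := ⟨u⟩
  set A := {w | R.Reachable u w}
  have hclosed : ∀ x ∈ A, ∀ y, R.Adj x y → y ∈ A := fun x hx y hxy ↦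
    SimpleGraph.Reachable.trans hx hxy.reachable
  by_contra! hle
  rcases le_total (56 * (A.ncard : ℝ)) (ε * Fintype.card V) with hA | hA
  · have hlt := hU.card_lt_ncard_nbhd hD ⟨u, SimpleGraph.Reachable.refl u⟩ hA
    have : (nbhd R A).ncard ≤ A.ncard :=
      Set.ncard_le_ncard fun y ⟨x, hx, hyx⟩ ↦ hclosed x hx y hyx.symm
    omega
  · obtain ⟨a, b, hab⟩ := exists_pair_ne K
    have hcover := hU.le_of_cover (ℓ := fun y ↦ if y ∈ A then a else b) (Z := fun _ ↦ {a})
      (B := A.ncard) hD hr hε hε1 hA (fun x hx y hxy ↦ by simp [hclosed x hx y hxy])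
      (fun x _ ↦ le_of_eq (by simp [hab.symm]))
    rw [min_eq_left hle] at hcover
    have : 0 < ε * (Fintype.card V : ℝ) := mul_pos hε (mod_cast Fintype.card_pos)
    linarith

theorem UpperUniform.connected [Nonempty V] [Nontrivial K] (hU : UpperUniform K r ε R)
    (hD : PosaDegrees r ε R) (hr : 0 < r) (hε : 0 < ε) (hε1 : ε ≤ 1) : R.Connected := by
  refine ⟨fun u v ↦ ?_⟩
  by_contra huv
  have hdisj : Disjoint {w | R.Reachable u w} {w | R.Reachable v w} :=
    Set.disjoint_left.2 fun w hu hv ↦ huv (SimpleGraph.Reachable.trans hu hv.symm)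
  have hcard := Set.ncard_le_card ({w | R.Reachable u w} ∪ {w | R.Reachable v w})
  rw [Set.ncard_union_eq hdisj, Nat.card_eq_fintype_card] at hcard
  have hcard' : ({w | R.Reachable u w}.ncard : ℝ) + {w | R.Reachable v w}.ncard ≤
      Fintype.card V := by exact_mod_cast hcard
  linarith [hU.lt_ncard_reachable hD hr hε hε1 u, hU.lt_ncard_reachable hD hr hε hε1 v]

end UpperUniform

section Growth

variable [Fintype V] {K : Type*} {r ε : ℝ} {R F : SimpleGraph V} {P : List V}
  {k L t₁ t₂ t : ℕ}

/-- The parameters of the rotation argument on `n` vertices: paths are cut into at most `k` blocks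
of length `L`; during the first `t₁` rotations the set of heads doubles, during the next `t₂` it
gains `ε n / 2` each time, and `loss` bounds the error terms in the labelling of the vertices. -/
structure Rounds (ε : ℝ) (n k L t₁ t₂ : ℕ) : Prop where
  pos : 0 < L
  cover : n ≤ k * L
  doubling : n < 2 ^ t₁
  linear : 2 ≤ t₂ * ε
  loss : 2 * k + (t₁ + t₂) * L ≤ ε / 4 * n

theorem UpperUniform.two_pow_le_ncard_Rset (hU : UpperUniform K r ε R) (hD : PosaDegrees r ε R)
    (hRF : R ≤ F) (hP : IsLongestPathOn F P) :
    ∀ t, ε * Fintype.card V ≤ 56 * (Rset R P t).ncard ∨ 2 ^ t ≤ (Rset R P t).ncard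
  | 0 => by
    obtain ⟨x, hx⟩ : ∃ x, P.head? = some x := ⟨_, List.head?_eq_some_head hP.1.1⟩
    exact .inr ((Set.ncard_pos).2 ⟨x, P, rfl, hx⟩)
  | t + 1 => by
    have hmono : (Rset R P t).ncard ≤ (Rset R P (t + 1)).ncard :=
      Set.ncard_le_ncard (Rset_mono t.le_succ)
    rcases le_or_gt (ε * Fintype.card V) (56 * (Rset R P t).ncard) with hlin | hlin
    · exact .inl (hlin.trans (by gcongr))
    · have ih := (two_pow_le_ncard_Rset hU hD hRF hP t).resolve_left hlin.not_ge
      have hne : (Rset R P t).Nonempty :=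
        (Set.ncard_pos).1 (lt_of_lt_of_le (by positivity) ih)
      have := hU.card_lt_ncard_nbhd hD hne hlin.le
      have := ncard_nbhd_Rset_le (t := t) hRF hP
      rw [pow_succ]
      omega

theorem UpperUniform.gain_ncard_Rset (hU : UpperUniform (Fin (k + 1) × Set (Option Bool)) r ε R)
    (hD : PosaDegrees r ε R) (hr : 0 < r) (hε : 0 < ε) (hε1 : ε ≤ 1)
    (hround : Rounds ε (Fintype.card V) k L t₁ t₂) (hRF : R ≤ F) (hP : IsLongestPathOn F P)
    (hlin : ε * Fintype.card V ≤ 56 * (Rset R P t).ncard) (ht : t ≤ t₁ + t₂) :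
    min ((Rset R P t).ncard : ℝ) (Fintype.card V / 2) + ε / 2 * Fintype.card V ≤
      (Rset R P (t + 1)).ncard := by
  have : Nonempty V := ⟨P.head hP.1.1⟩
  have hlen : P.length ≤ k * L := hP.1.2.1.length_le_card.trans hround.cover
  obtain ⟨ℓ, Z, hlabel⟩ := exists_labelling hRF hP hround.pos hlen t
  have hB : ∀ x ∈ Rset R P t, ({y | ℓ y ∈ Z x}.ncard : ℝ) ≤
      (Rset R P (t + 1)).ncard + ε / 4 * Fintype.card V := by
    intro x hx
    have hcard : ({y | ℓ y ∈ Z x}.ncard : ℝ) ≤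
        (Rset R P (t + 1)).ncard + 2 * k + (t₁ + t₂ : ℕ) * L := by
      exact_mod_cast (hlabel x hx).2.trans (by gcongr)
    have := hround.loss
    push_cast at hcard
    linarith
  have := hU.le_of_cover hD hr hε hε1 hlin (fun x hx ↦ (hlabel x hx).1) hB
  linarith

theorem UpperUniform.le_ncard_Rset (hU : UpperUniform (Fin (k + 1) × Set (Option Bool)) r ε R)
    (hD : PosaDegrees r ε R) (hr : 0 < r) (hε : 0 < ε) (hε1 : ε ≤ 1)
    (hround : Rounds ε (Fintype.card V) k L t₁ t₂) (hRF : R ≤ F) (hP : IsLongestPathOn F P) :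
    (1 / 2 + ε / 4) * Fintype.card V ≤ (Rset R P (t₁ + t₂)).ncard := by
  have hlin : ∀ t, t₁ ≤ t → ε * Fintype.card V ≤ 56 * (Rset R P t).ncard := by
    intro t ht
    have hmono : (Rset R P t₁).ncard ≤ (Rset R P t).ncard := Set.ncard_le_ncard (Rset_mono ht)
    rcases hU.two_pow_le_ncard_Rset hD hRF hP t₁ with h | h
    · exact h.trans (by gcongr)
    · have := Set.ncard_le_card (Rset R P t₁)
      rw [Nat.card_eq_fintype_card] at this
      have := hround.doubling
      omega
  set n : ℝ := (Fintype.card V : ℝ)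
  have hn : 0 ≤ n := Nat.cast_nonneg _
  have hgrow : ∀ j, j ≤ t₂ →
      min (n / 2 + ε / 2 * n) (j * (ε / 2 * n)) ≤ (Rset R P (t₁ + j)).ncard := by
    intro j
    induction j with
    | zero => exact fun _ ↦ (min_le_right _ _).trans (by simp)
    | succ j ih =>
      intro hj
      have hgain := hU.gain_ncard_Rset hD hr hε hε1 hround hRF hP (hlin (t₁ + j) (by omega))
        (by omega)
      have ih := ih (by omega)
      have : 0 ≤ ε / 2 * n := by positivity
      refine le_trans ?_ hgain
      rw [← min_add_add_right]
      push_cast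
      rcases min_le_iff.1 ih with h | h
      · exact le_min ((min_le_left _ _).trans (by linarith)) (min_le_left _ _)
      · exact le_min ((min_le_right _ _).trans (by linarith)) (min_le_left _ _)
  refine le_trans (le_min ?_ ?_) (hgrow t₂ le_rfl)
  · nlinarith [mul_nonneg hε.le hn]
  · nlinarith [mul_nonneg hε.le hn, hround.linear]

/-- Rotating one end of `P` gives the set `S`; rotating the other end of each resulting path gives
the sets `T v`. -/
theorem UpperUniform.re {n : ℕ} [NeZero n] {R : SimpleGraph (Fin n)}
    (hU : UpperUniform (Fin (k + 1) × Set (Option Bool)) r ε R)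
    (hD : PosaDegrees r ε R) (hr : 0 < r) (hε : 0 < ε) (hε1 : ε ≤ 1)
    (hround : Rounds ε n k L t₁ t₂) : RE n (1 / 2 + ε / 4) R := by
  refine ⟨hU.connected hD hr hε hε1, fun P hP0 hP ↦ or_iff_not_imp_left.2 fun hlong ↦ ?_⟩
  push Not at hlong
  set F := R ⊔ listGraph P
  have hRF : R ≤ F := le_sup_left
  have hPF : IsPathOn F P := ⟨hP0, hP, (isChain_listGraph hP).imp fun _ _ h ↦ .inr h⟩
  have hlongest : ∀ Q, IsPathOn F Q → Q.Perm P → IsLongestPathOn F Q :=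
    fun Q hQ hperm ↦ ⟨hQ, fun Q' hQ' ↦ hperm.length_eq ▸ hlong Q' hQ'⟩
  have hcard : ∀ Q, IsLongestPathOn F Q →
      (1 / 2 + ε / 4) * n ≤ (Rset R Q (t₁ + t₂)).ncard := fun Q hQ ↦ by
    simpa using hU.le_ncard_Rset hD hr hε hε1 (by simpa using hround) hRF hQ
  have hreverse : ∀ Q, IsPathOn F Q → IsPathOn F Q.reverse := fun Q hQ ↦
    ⟨by simpa using hQ.1, List.nodup_reverse.2 hQ.2.1,
      List.isChain_reverse.2 (hQ.2.2.imp fun _ _ h ↦ h.symm)⟩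
  choose! Q hQ hhead using fun v (hv : v ∈ Rset R P (t₁ + t₂)) ↦ hv
  have hperm : ∀ v ∈ Rset R P (t₁ + t₂), (Q v).reverse.Perm P := fun v hv ↦
    (List.reverse_perm _).trans (perm_of_mem_rotSet (hQ v hv))
  have hpath : ∀ v ∈ Rset R P (t₁ + t₂), IsPathOn F (Q v).reverse := fun v hv ↦
    hreverse _ (isPathOn_of_mem_rotSet hRF hPF (hQ v hv))
  refine ⟨Rset R P (t₁ + t₂), hcard P (hlongest P hPF (.refl _)),
    fun v ↦ Rset R (Q v).reverse (t₁ + t₂),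
    fun v hv ↦ hcard _ (hlongest _ (hpath v hv) (hperm v hv)), ?_⟩
  rintro v hv w ⟨l, hl, hw⟩
  refine ⟨l.reverse, hreverse l (isPathOn_of_mem_rotSet hRF (hpath v hv) hl), ?_, ?_, ?_⟩
  · rw [List.head?_reverse, getLast?_of_mem_rotSet hl, List.getLast?_reverse, hhead v hv]
  · rw [List.getLast?_reverse, hw]
  · rw [List.toFinset_reverse]
    exact List.toFinset_eq_of_perm _ _ ((perm_of_mem_rotSet hl).trans (hperm v hv))

end Growth

/-! ### Exponential moments in the binomial random graph -/

section Expectation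

open Finset

open Classical in
theorem sum_edgeFinset_eq_sum_powerset [Fintype V] [DecidableEq V] {M : Type*} [AddCommMonoid M]
    (f : Finset (Sym2 V) → M) :
    ∑ G : SimpleGraph V, f G.edgeFinset = ∑ F ∈ (⊤ : SimpleGraph V).edgeFinset.powerset, f F := by
  refine sum_bij' (fun G _ ↦ G.edgeFinset) (fun F _ ↦ SimpleGraph.fromEdgeSet F)
    (fun G _ ↦ mem_powerset.2 (SimpleGraph.edgeFinset_mono le_top)) (fun _ _ ↦ mem_univ _)
    (fun G _ ↦ by simp) (fun F hF ↦ ?_) fun _ _ ↦ rfl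
  ext e
  have hdiag : e ∈ F → ¬ e.IsDiag := fun he ↦ by
    simpa using mem_powerset.1 hF he
  simpa using hdiag

variable {n : ℕ} {p q : ℝ} {f g : SimpleGraph (Fin n) → ℝ} {A B D : SimpleGraph (Fin n) → Prop}

/-- The expectation of `f` over the binomial random graph `G_{n,p}`. -/
noncomputable def Ex (n : ℕ) (p : ℝ) (f : SimpleGraph (Fin n) → ℝ) : ℝ :=
  ∑ G : SimpleGraph (Fin n), weight n p G * f G

open Classical in
/-- The product of the factors `a e` over the edges `e` of `G` and `b e` over its non-edges. -/
noncomputable def edgeProd (a b : Sym2 (Fin n) → ℝ) (G : SimpleGraph (Fin n)) : ℝ :=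
  ∏ e ∈ (⊤ : SimpleGraph (Fin n)).edgeFinset, if e ∈ G.edgeSet then a e else b e

theorem Ex_edgeProd (a b : Sym2 (Fin n) → ℝ) : Ex n p (edgeProd a b) =
    ∏ e ∈ (⊤ : SimpleGraph (Fin n)).edgeFinset, (p * a e + (1 - p) * b e) := by
  classical
  rw [prod_add, ← sum_edgeFinset_eq_sum_powerset, Ex]
  refine sum_congr rfl fun G _ ↦ ?_
  have hsub : G.edgeFinset ⊆ (⊤ : SimpleGraph (Fin n)).edgeFinset :=
    SimpleGraph.edgeFinset_mono le_top
  have hcard : G.edgeSet.ncard = #G.edgeFinset := by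
    rw [← Set.ncard_coe_finset, SimpleGraph.coe_edgeFinset]
  have hin : {e ∈ (⊤ : SimpleGraph (Fin n)).edgeFinset | e ∈ G.edgeSet} = G.edgeFinset := by
    ext e
    simpa using G.not_isDiag_of_mem_edgeSet
  have hout : {e ∈ (⊤ : SimpleGraph (Fin n)).edgeFinset | e ∉ G.edgeSet} =
      (⊤ : SimpleGraph (Fin n)).edgeFinset \ G.edgeFinset := by
    rw [filter_not, hin]
  rw [edgeProd, prod_ite, hin, hout, prod_mul_distrib, prod_mul_distrib, prod_const, prod_const,
    card_sdiff_of_subset hsub, SimpleGraph.card_edgeFinset_top_eq_card_choose_two,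
    Fintype.card_fin, weight, hcard]
  ring

theorem Ex_one (n : ℕ) (p : ℝ) : Ex n p (fun _ ↦ 1) = 1 := by
  have hone : edgeProd (n := n) (fun _ ↦ 1) (fun _ ↦ 1) = fun _ ↦ 1 :=
    funext fun G ↦ prod_eq_one fun e _ ↦ ite_self 1
  rw [← hone, Ex_edgeProd]
  exact prod_eq_one fun e _ ↦ by ring

theorem weight_nonneg (hp : p ∈ Set.Icc 0 1) (G : SimpleGraph (Fin n)) : 0 ≤ weight n p G :=
  mul_nonneg (pow_nonneg hp.1 _) (pow_nonneg (sub_nonneg.2 hp.2) _)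

theorem Ex_mono (hp : p ∈ Set.Icc 0 1) (h : ∀ G, f G ≤ g G) : Ex n p f ≤ Ex n p g :=
  sum_le_sum fun G _ ↦ mul_le_mul_of_nonneg_left (h G) (weight_nonneg hp G)

theorem Ex_const_mul (c : ℝ) (f : SimpleGraph (Fin n) → ℝ) :
    Ex n p (fun G ↦ c * f G) = c * Ex n p f := by
  simp only [Ex, mul_sum, mul_left_comm]

theorem Ex_sum {ι : Type*} (s : Finset ι) (f : ι → SimpleGraph (Fin n) → ℝ) :
    Ex n p (fun G ↦ ∑ i ∈ s, f i G) = ∑ i ∈ s, Ex n p (f i) := by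
  simp only [Ex, mul_sum]
  exact sum_comm

theorem Ex_add (f g : SimpleGraph (Fin n) → ℝ) :
    Ex n p (fun G ↦ f G + g G) = Ex n p f + Ex n p g := by
  simp only [Ex, mul_add, sum_add_distrib]

open Classical in
theorem Pr_eq_Ex (A : SimpleGraph (Fin n) → Prop) :
    Pr n p A = Ex n p fun G ↦ if A G then 1 else 0 := by
  simp only [Pr, Ex, mul_ite, mul_one, mul_zero]

theorem Ex_Ex_edgeProd_inf (a b : Sym2 (Fin n) → ℝ) :
    Ex n p (fun G ↦ Ex n q fun Q ↦ edgeProd a b (G ⊓ Q)) = Ex n (p * q) (edgeProd a b) := by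
  classical
  have hinf : ∀ G Q : SimpleGraph (Fin n), edgeProd a b (G ⊓ Q) =
      edgeProd (fun e ↦ if e ∈ G.edgeSet then a e else b e) b Q := by
    intro G Q
    refine prod_congr rfl fun e _ ↦ ?_
    simp only [SimpleGraph.edgeSet_inf, Set.mem_inter_iff]
    split_ifs <;> tauto
  have hinner : ∀ G : SimpleGraph (Fin n), Ex n q (fun Q ↦ edgeProd a b (G ⊓ Q)) =
      edgeProd (fun e ↦ q * a e + (1 - q) * b e) b G := by
    intro G
    simp only [hinf, Ex_edgeProd]
    refine prod_congr rfl fun e _ ↦ ?_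
    split_ifs <;> ring
  simp only [hinner, Ex_edgeProd]
  exact prod_congr rfl fun e _ ↦ by ring

open Classical in
theorem edgeProd_indicator (G T : SimpleGraph (Fin n)) :
    edgeProd (fun e ↦ if e ∈ T.edgeSet then 1 else 0) (fun e ↦ if e ∈ T.edgeSet then 0 else 1) G =
      if G = T then 1 else 0 := by
  split_ifs with h
  · subst h
    exact prod_eq_one fun e _ ↦ by grind
  · obtain ⟨e, he⟩ : ∃ e, ¬ (e ∈ G.edgeSet ↔ e ∈ T.edgeSet) := by
      by_contra! heq
      exact h (SimpleGraph.edgeSet_injective (Set.ext heq))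
    refine prod_eq_zero (i := e) ?_ ?_
    · have hG := G.not_isDiag_of_mem_edgeSet (e := e)
      have hT := T.not_isDiag_of_mem_edgeSet (e := e)
      simp only [SimpleGraph.edgeFinset_top, Set.toFinset_compl, mem_compl, Set.mem_toFinset,
        Sym2.mem_diagSet]
      tauto
    · grind

/-- A random subgraph of `G_{n,p}` of density `q` is distributed as `G_{n,pq}`. -/
theorem Ex_Ex_inf (f : SimpleGraph (Fin n) → ℝ) :
    Ex n p (fun G ↦ Ex n q fun Q ↦ f (G ⊓ Q)) = Ex n (p * q) f := by
  classical
  have hf : ∀ G, f G = ∑ T, f T * if G = T then 1 else 0 := fun G ↦ by simp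
  rw [funext hf]
  simp only [Ex_sum, Ex_const_mul, ← edgeProd_indicator, Ex_Ex_edgeProd_inf]

theorem Pr_Pr_inf (A : SimpleGraph (Fin n) → Prop) :
    Ex n p (fun G ↦ Pr n q fun Q ↦ A (G ⊓ Q)) = Pr n (p * q) A := by
  classical
  simp only [Pr_eq_Ex]
  exact Ex_Ex_inf fun G ↦ if A G then 1 else 0

theorem Pr_le_Ex (hp : p ∈ Set.Icc 0 1) (hf : ∀ G, 0 ≤ f G) (h : ∀ G, A G → 1 ≤ f G) :
    Pr n p A ≤ Ex n p f := by
  classical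
  rw [Pr_eq_Ex]
  refine Ex_mono hp fun G ↦ ?_
  split_ifs with hA
  exacts [h G hA, hf G]

theorem Pr_nonneg (hp : p ∈ Set.Icc 0 1) (A : SimpleGraph (Fin n) → Prop) : 0 ≤ Pr n p A := by
  classical
  refine sum_nonneg fun G _ ↦ ?_
  split_ifs
  exacts [weight_nonneg hp G, le_rfl]

theorem Pr_mono (hp : p ∈ Set.Icc 0 1) (h : ∀ G, A G → B G) : Pr n p A ≤ Pr n p B := by
  classical
  rw [Pr_eq_Ex B]
  exact Pr_le_Ex hp (fun G ↦ by split_ifs <;> norm_num) fun G hA ↦ by rw [if_pos (h G hA)]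

theorem Pr_le_add (hp : p ∈ Set.Icc 0 1) (h : ∀ G, A G → B G ∨ D G) :
    Pr n p A ≤ Pr n p B + Pr n p D := by
  classical
  rw [Pr_eq_Ex B, Pr_eq_Ex D, ← Ex_add]
  refine Pr_le_Ex hp (fun G ↦ by split_ifs <;> norm_num) fun G hA ↦ ?_
  rcases h G hA with hB | hD
  · rw [if_pos hB]
    split_ifs <;> norm_num
  · rw [if_pos hD]
    split_ifs <;> norm_num

theorem one_le_Pr_add_Pr (hp : p ∈ Set.Icc 0 1) (h : ∀ G, B G ∨ D G) :
    1 ≤ Pr n p B + Pr n p D := by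
  classical
  have htrue : Pr n p (fun _ ↦ True) = 1 := by simp [Pr_eq_Ex, Ex_one]
  exact htrue.ge.trans (Pr_le_add hp fun G _ ↦ h G)

theorem one_sub_sub_le_Pr (hp : p ∈ Set.Icc 0 1) (h : ∀ G, ¬ B G → ¬ D G → A G) :
    1 - Pr n p B - Pr n p D ≤ Pr n p A := by
  have hBDA := one_le_Pr_add_Pr hp (B := fun G ↦ B G ∨ D G) (D := A)
    fun G ↦ or_iff_not_imp_left.2 fun hG ↦ h G (not_or.1 hG).1 (not_or.1 hG).2
  have hBD := Pr_le_add hp fun G (hG : B G ∨ D G) ↦ hG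
  linarith

theorem Pr_half_le_Pr_inf_le (hp : p ∈ Set.Icc 0 1) (hq : q ∈ Set.Icc 0 1)
    (A : SimpleGraph (Fin n) → Prop) :
    Pr n p (fun G ↦ 1 / 2 ≤ Pr n q fun Q ↦ A (G ⊓ Q)) ≤ 2 * Pr n (p * q) A := by
  rw [← Pr_Pr_inf, ← Ex_const_mul]
  exact Pr_le_Ex hp (fun G ↦ mul_nonneg zero_le_two (Pr_nonneg hq _)) fun G hG ↦ by linarith

open Classical in
theorem adjPairs_eq_sum [Fintype V] [DecidableEq V] (G : SimpleGraph V) (A : Finset (V × V)) :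
    adjPairs G A = ∑ e ∈ (⊤ : SimpleGraph V).edgeFinset,
      if e ∈ G.edgeSet then #{z ∈ A | s(z.1, z.2) = e} else 0 := by
  rw [adjPairs, card_eq_sum_card_fiberwise (f := fun z ↦ s(z.1, z.2))
    (t := (⊤ : SimpleGraph V).edgeFinset)]
  · refine sum_congr rfl fun e _ ↦ ?_
    rw [filter_filter]
    split_ifs with he
    · congr 1
      refine filter_congr fun z _ ↦ and_iff_right_of_imp ?_
      rintro rfl
      exact he
    · refine card_eq_zero.2 (filter_eq_empty_iff.2 ?_)
      rintro z _ ⟨hz, rfl⟩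
      exact he hz
  · intro z hz
    simpa using (mem_filter.1 hz).2.ne

theorem card_filter_ne_eq_sum [Fintype V] [DecidableEq V] (A : Finset (V × V)) :
    #{z ∈ A | z.1 ≠ z.2} = ∑ e ∈ (⊤ : SimpleGraph V).edgeFinset, #{z ∈ A | s(z.1, z.2) = e} := by
  trans adjPairs ⊤ A
  · simp [adjPairs]
  · rw [adjPairs_eq_sum]
    exact sum_congr rfl fun e he ↦ if_pos (SimpleGraph.mem_edgeFinset.1 he)

theorem card_filter_mk_eq_le_two [DecidableEq V] (A : Finset (V × V)) (e : Sym2 V) :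
    #{z ∈ A | s(z.1, z.2) = e} ≤ 2 := by
  induction e with | h x y
  refine (card_le_card fun z hz ↦ ?_).trans (card_le_two (a := (x, y)) (b := (y, x)))
  simpa [Prod.ext_iff] using (mem_filter.1 hz).2

theorem one_add_mul_exp_sub_one_le {lam w : ℝ} (hp : 0 ≤ p) (hlam : |lam| ≤ 1 / 2) (hw : 0 ≤ w)
    (hw2 : w ≤ 2) : p * exp (lam * w) + (1 - p) * 1 ≤ exp (p * (w * (lam + 2 * lam ^ 2))) := by
  have habs : |lam * w| ≤ 1 := by
    rw [abs_mul, abs_of_nonneg hw]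
    nlinarith [abs_nonneg lam]
  have hexp : exp (lam * w) - 1 ≤ w * (lam + 2 * lam ^ 2) := by
    have := (abs_le.1 (abs_exp_sub_one_sub_id_le habs)).2
    nlinarith [mul_nonneg (mul_nonneg hw (sub_nonneg.2 hw2)) (sq_nonneg lam)]
  calc p * exp (lam * w) + (1 - p) * 1 = p * (exp (lam * w) - 1) + 1 := by ring
    _ ≤ exp (p * (exp (lam * w) - 1)) := add_one_le_exp _
    _ ≤ _ := by gcongr

/-- Both orientations of an edge may occur in `A`, so that an edge contributes `0`, `1` or `2`. -/
theorem Ex_exp_adjPairs_le (hp : p ∈ Set.Icc 0 1) {lam : ℝ} (hlam : |lam| ≤ 1 / 2)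
    (A : Finset (Fin n × Fin n)) :
    Ex n p (fun G ↦ exp (lam * adjPairs G A)) ≤
      exp (p * #{z ∈ A | z.1 ≠ z.2} * (lam + 2 * lam ^ 2)) := by
  classical
  have hprod : ∀ G : SimpleGraph (Fin n), exp (lam * adjPairs G A) =
      edgeProd (fun e ↦ exp (lam * #{z ∈ A | s(z.1, z.2) = e})) (fun _ ↦ 1) G := by
    intro G
    rw [adjPairs_eq_sum, Nat.cast_sum, mul_sum, exp_sum]
    refine prod_congr rfl fun e _ ↦ ?_
    split_ifs <;> simp
  have hsum : p * #{z ∈ A | z.1 ≠ z.2} * (lam + 2 * lam ^ 2) =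
      ∑ e ∈ (⊤ : SimpleGraph (Fin n)).edgeFinset,
        p * (#{z ∈ A | s(z.1, z.2) = e} * (lam + 2 * lam ^ 2)) := by
    rw [card_filter_ne_eq_sum, Nat.cast_sum, mul_assoc, sum_mul, mul_sum]
  rw [funext hprod, Ex_edgeProd, hsum, exp_sum]
  have hp1 := sub_nonneg.2 hp.2
  have hp0 := hp.1
  exact prod_le_prod (fun e _ ↦ by positivity) fun e _ ↦
    one_add_mul_exp_sub_one_le hp0 hlam (Nat.cast_nonneg _)
      (mod_cast card_filter_mk_eq_le_two A e)

theorem Pr_exists_le_adjPairs_le (hp : p ∈ Set.Icc 0 1) {lam : ℝ} (hlam : |lam| ≤ 1 / 2)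
    {ι : Type*} (s : Finset ι) (A : ι → Finset (Fin n × Fin n)) (a : ι → ℝ) :
    Pr n p (fun G ↦ ∃ i ∈ s, a i ≤ lam * adjPairs G (A i)) ≤
      ∑ i ∈ s, exp (p * #{z ∈ A i | z.1 ≠ z.2} * (lam + 2 * lam ^ 2) - a i) := by
  calc Pr n p (fun G ↦ ∃ i ∈ s, a i ≤ lam * adjPairs G (A i))
    _ ≤ Ex n p fun G ↦ ∑ i ∈ s, exp (-a i) * exp (lam * adjPairs G (A i)) := by
        refine Pr_le_Ex hp (fun G ↦ by positivity) fun G ⟨i, hi, ha⟩ ↦ ?_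
        refine le_trans ?_ (single_le_sum (fun i _ ↦ by positivity) hi)
        rw [← exp_add]
        exact one_le_exp (by linarith)
    _ = ∑ i ∈ s, exp (-a i) * Ex n p fun G ↦ exp (lam * adjPairs G (A i)) := by
        simp only [Ex_sum, Ex_const_mul]
    _ ≤ _ := by
        refine sum_le_sum fun i _ ↦ ?_
        rw [sub_eq_neg_add, exp_add]
        gcongr
        exact Ex_exp_adjPairs_le hp hlam _

end Expectation

section Tails

open Finset

variable {n : ℕ} {q r ε : ℝ}

open Classical in
theorem adjPairs_singleton_product [Fintype V] (T Q : SimpleGraph V) (v : V) :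
    adjPairs Q ({v} ×ˢ ({w | T.Adj v w} : Finset V)) = deg (T ⊓ Q) v := by
  have hN : (T ⊓ Q).neighborSet v = ({w | T.Adj v w ∧ Q.Adj v w} : Finset V) := by
    ext w
    simp
  rw [adjPairs, deg, hN, Set.ncard_coe_finset, singleton_product, filter_map, card_map,
    filter_filter]
  rfl

theorem natCast_mul_exp_neg_le {x : ℝ} (hn : 0 < n) (hx : 2 * log n ≤ x) :
    n * exp (-x) ≤ 1 / n :=
  calc n * exp (-x) ≤ n * exp (-log n + -log n) := by
        gcongr
        linarith
    _ = 1 / n := by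
        rw [exp_add, exp_neg, exp_log (by positivity)]
        field_simp

theorem Pr_exists_deg_inf_lt_le {g d : ℝ} (hq : q ∈ Set.Icc 0 1) (hg : g ∈ Set.Icc 0 1)
    {T : SimpleGraph (Fin n)} (hd : ∀ v, d ≤ deg T v) :
    Pr n q (fun Q ↦ ∃ v, (deg (T ⊓ Q) v : ℝ) < (1 - g) * q * deg T v) ≤
      n * exp (-(g ^ 2 / 8 * (q * d))) := by
  classical
  obtain ⟨hg0, hg1⟩ := hg
  let A (v : Fin n) : Finset (Fin n × Fin n) := {v} ×ˢ ({w | T.Adj v w} : Finset (Fin n))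
  have hcard : ∀ v, #{z ∈ A v | z.1 ≠ z.2} = deg T v := fun v ↦ by
    have := adjPairs_singleton_product T ⊤ v
    rw [inf_top_eq] at this
    rw [← this, adjPairs]
    simp only [SimpleGraph.top_adj, A]
  calc Pr n q (fun Q ↦ ∃ v, (deg (T ⊓ Q) v : ℝ) < (1 - g) * q * deg T v)
    _ ≤ Pr n q fun Q ↦ ∃ v ∈ univ,
          -(g / 4) * ((1 - g) * q * deg T v) ≤ -(g / 4) * adjPairs Q (A v) := by
        refine Pr_mono hq fun Q ⟨v, hv⟩ ↦ ⟨v, mem_univ v, ?_⟩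
        rw [adjPairs_singleton_product]
        exact mul_le_mul_of_nonpos_left hv.le (by linarith)
    _ ≤ ∑ v, exp (q * deg T v * (-(g / 4) + 2 * (-(g / 4)) ^ 2) -
          -(g / 4) * ((1 - g) * q * deg T v)) := by
        simp only [← hcard]
        exact Pr_exists_le_adjPairs_le hq (abs_le.2 ⟨by linarith, by linarith⟩) _ _ _
    _ ≤ ∑ v : Fin n, exp (-(g ^ 2 / 8 * (q * d))) := by
        refine sum_le_sum fun v _ ↦ exp_le_exp.2 ?_
        have := mul_le_mul_of_nonneg_left (hd v) (mul_nonneg (sq_nonneg g) hq.1)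
        linarith
    _ = n * exp (-(g ^ 2 / 8 * (q * d))) := by simp

theorem sum_erase_empty_mul_sum_pow_card [Fintype V] [DecidableEq V] (t : ℝ) :
    ∑ z ∈ univ.erase (∅ : Finset V) ×ˢ (univ : Finset (Finset V)), t ^ #z.1 * t ^ #z.2 =
      ((t + 1) ^ Fintype.card V - 1) * (t + 1) ^ Fintype.card V := by
  have hsum : ∑ X : Finset V, t ^ #X = (t + 1) ^ Fintype.card V := by
    simpa using Fintype.sum_pow_mul_eq_add_pow V t 1
  simp only [sum_product]
  rw [← sum_mul_sum, sum_erase_eq_sub (mem_univ _), hsum, card_empty, pow_zero]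

/-- The bound is a sum over all pairs `X`, `Y`, where `|X| + |Y| ≤ 8 |X|` makes the factor for a
pair at most `t ^ (|X| + |Y|)`. -/
theorem Pr_exists_small_le (hr : r ∈ Set.Icc 0 1) (hε : 0 ≤ ε) :
    Pr n r (fun G ↦ ∃ X Y : Finset (Fin n), X.Nonempty ∧ 56 * (#X : ℝ) ≤ ε * n ∧
      #Y ≤ 7 * #X ∧ r * (ε * n) * #X ≤ adjPairs G (X ×ˢ Y)) ≤
      ((exp (-(3 / 64 * (ε * n * r))) + 1) ^ n - 1) *
        (exp (-(3 / 64 * (ε * n * r))) + 1) ^ n := by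
  classical
  set t := exp (-(3 / 64 * (ε * n * r)))
  let s : Finset (Finset (Fin n) × Finset (Fin n)) :=
    {z | z.1.Nonempty ∧ 56 * (#z.1 : ℝ) ≤ ε * n ∧ #z.2 ≤ 7 * #z.1}
  calc _ ≤ Pr n r fun G ↦ ∃ z ∈ s,
          1 / 2 * (r * (ε * n) * #z.1) ≤ 1 / 2 * adjPairs G (z.1 ×ˢ z.2) := by
        refine Pr_mono hr fun G ⟨X, Y, hX, hXε, hY, hadj⟩ ↦ ⟨(X, Y), ?_, by gcongr⟩
        exact mem_filter.2 ⟨mem_univ _, hX, hXε, hY⟩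
    _ ≤ ∑ z ∈ s, exp (r * #{w ∈ z.1 ×ˢ z.2 | w.1 ≠ w.2} * (1 / 2 + 2 * (1 / 2) ^ 2) -
          1 / 2 * (r * (ε * n) * #z.1)) :=
        Pr_exists_le_adjPairs_le hr (by norm_num) s (fun z ↦ z.1 ×ˢ z.2) _
    _ ≤ ∑ z ∈ s, t ^ #z.1 * t ^ #z.2 := by
        refine sum_le_sum fun ⟨X, Y⟩ hz ↦ ?_
        obtain ⟨-, -, hXε, hY⟩ := mem_filter.1 hz
        have hcard : (#{w ∈ X ×ˢ Y | w.1 ≠ w.2} : ℝ) ≤ #X * #Y := by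
          exact_mod_cast (card_filter_le _ _).trans (card_product _ _).le
        have hY' : (#Y : ℝ) ≤ 7 * #X := by exact_mod_cast hY
        have hr0 := hr.1
        rw [← pow_add, ← exp_nat_mul]
        refine exp_le_exp.2 ?_
        push_cast
        calc _ ≤ r * (#X * (7 * #X)) * 1 - 1 / 2 * (r * (ε * n) * #X) := by
              norm_num1
              gcongr
              exact hcard.trans (by gcongr)
          _ ≤ -(3 / 8 * (ε * n * r)) * #X := by
              nlinarith [mul_le_mul_of_nonneg_left hXε (mul_nonneg hr0 (Nat.cast_nonneg #X))]
          _ ≤ _ := by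
              have : 0 ≤ ε * n * r := by positivity
              nlinarith
    _ ≤ ∑ z ∈ univ.erase ∅ ×ˢ univ, t ^ #z.1 * t ^ #z.2 := by
        refine sum_le_sum_of_subset_of_nonneg (fun z hz ↦ ?_) fun _ _ _ ↦ by positivity
        have := (mem_filter.1 hz).2.1
        simpa using this.ne_empty
    _ = _ := by rw [sum_erase_empty_mul_sum_pow_card, Fintype.card_fin]

open Classical in
theorem card_labellings_le (n : ℕ) (K : Type*) [Fintype K] :
    (Fintype.card ((Fin n → K) × (Fin n → Set K)) : ℝ) ≤ exp (2 * Fintype.card K * n) := by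
  have hK := add_one_le_exp (Fintype.card K : ℝ)
  have hK2 : (2 : ℝ) ^ Fintype.card K ≤ exp (Fintype.card K) := by
    rw [← mul_one (Fintype.card K : ℝ), exp_nat_mul]
    gcongr
    linarith [add_one_le_exp (1 : ℝ)]
  rw [Fintype.card_prod, Fintype.card_fun, Fintype.card_fun, Fintype.card_set, Fintype.card_fin]
  push_cast
  calc (Fintype.card K : ℝ) ^ n * (2 ^ Fintype.card K) ^ n
    _ ≤ exp (Fintype.card K) ^ n * exp (Fintype.card K) ^ n := by
        gcongr
        linarith
    _ = _ := by
        rw [← exp_nat_mul, ← exp_add]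
        ring_nf

open Classical in
theorem Pr_exists_labels_le {K : Type*} [Fintype K] {γ : ℝ} (hr : r ∈ Set.Icc 0 1)
    (hγ : γ ∈ Set.Icc 0 1) :
    Pr n r (fun G ↦ ∃ (ℓ : Fin n → K) (Z : Fin n → Set K),
      r * #{z : Fin n × Fin n | ℓ z.2 ∈ Z z.1} + γ * n ^ 2 * r ≤
        adjPairs G {z | ℓ z.2 ∈ Z z.1}) ≤
      exp (2 * Fintype.card K * n - γ ^ 2 / 8 * n ^ 2 * r) := by
  obtain ⟨hγ0, hγ1⟩ := hγ
  have hr0 := hr.1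
  let A (i : (Fin n → K) × (Fin n → Set K)) : Finset (Fin n × Fin n) := {z | i.1 z.2 ∈ i.2 z.1}
  have hA : ∀ i, (#(A i) : ℝ) ≤ n ^ 2 := fun i ↦ by
    have := card_le_univ (A i)
    rw [Fintype.card_prod, Fintype.card_fin, ← sq] at this
    exact_mod_cast this
  calc _ ≤ Pr n r fun G ↦ ∃ i ∈ univ,
          γ / 4 * (r * #(A i) + γ * n ^ 2 * r) ≤ γ / 4 * adjPairs G (A i) :=
        Pr_mono hr fun G ⟨ℓ, Z, h⟩ ↦ ⟨(ℓ, Z), mem_univ _, by gcongr⟩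
    _ ≤ ∑ i, exp (r * #{z ∈ A i | z.1 ≠ z.2} * (γ / 4 + 2 * (γ / 4) ^ 2) -
          γ / 4 * (r * #(A i) + γ * n ^ 2 * r)) := by
        convert Pr_exists_le_adjPairs_le (lam := γ / 4) hr
          (abs_le.2 ⟨by linarith, by linarith⟩) univ A _
    _ ≤ ∑ i : (Fin n → K) × (Fin n → Set K), exp (-(γ ^ 2 / 8 * n ^ 2 * r)) := by
        refine sum_le_sum fun i _ ↦ exp_le_exp.2 ?_
        calc _ ≤ r * #(A i) * (γ / 4 + 2 * (γ / 4) ^ 2) -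
              γ / 4 * (r * #(A i) + γ * n ^ 2 * r) := by
              gcongr
              exact filter_subset _ _
          _ ≤ _ := by
              nlinarith [mul_le_mul_of_nonneg_left (hA i) (mul_nonneg hr0 (sq_nonneg γ))]
    _ ≤ exp (2 * Fintype.card K * n) * exp (-(γ ^ 2 / 8 * n ^ 2 * r)) := by
        rw [sum_const, card_univ, nsmul_eq_mul]
        gcongr
        exact card_labellings_le n K
    _ = _ := by rw [← exp_add, sub_eq_add_neg]

theorem exists_of_not_upperUniform {K : Type*} {G : SimpleGraph (Fin n)}
    (h : ¬ UpperUniform K r ε G) :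
    (∃ X Y : Finset (Fin n), X.Nonempty ∧ 56 * (#X : ℝ) ≤ ε * n ∧
      #Y ≤ 7 * #X ∧ r * (ε * n) * #X ≤ adjPairs G (X ×ˢ Y)) ∨
    open Classical in ∃ (ℓ : Fin n → K) (Z : Fin n → Set K),
      r * #{z : Fin n × Fin n | ℓ z.2 ∈ Z z.1} + (ε / 32) ^ 2 * n ^ 2 * r ≤
        adjPairs G {z | ℓ z.2 ∈ Z z.1} := by
  contrapose! h
  refine ⟨fun X Y hX hXε hY ↦ ?_, fun ℓ Z ↦ ?_⟩
  · simpa using h.1 X Y hX (by simpa using hXε) hY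
  · simpa using (h.2 ℓ Z).le

theorem add_one_pow_sub_one_mul_le {t : ℝ} (hn : 2 ≤ n) (ht0 : 0 ≤ t) (ht : n * t ≤ 1 / n) :
    ((t + 1) ^ n - 1) * (t + 1) ^ n ≤ 4 / n := by
  have hn2 : (2 : ℝ) ≤ n := by exact_mod_cast hn
  have hn1 : 1 / (n : ℝ) ≤ 1 / 2 := by gcongr
  have hnt : 0 ≤ n * t := by positivity
  have hpow : (t + 1) ^ n ≤ 1 + 2 * (1 / n) :=
    calc (t + 1) ^ n ≤ exp t ^ n := by
          gcongr
          exact add_one_le_exp t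
      _ = exp (n * t) := (exp_nat_mul t n).symm
      _ ≤ 1 + 2 * (1 / n) := by
          have := (abs_le.1 (abs_exp_sub_one_sub_id_le
            (abs_le.2 ⟨by linarith, by linarith⟩ : |n * t| ≤ 1))).2
          nlinarith
  calc ((t + 1) ^ n - 1) * (t + 1) ^ n ≤ 2 * (1 / n) * 2 := by
        gcongr <;> linarith
    _ = 4 / n := by ring

theorem Pr_not_upperUniform_le {K : Type*} [Fintype K] (hr : r ∈ Set.Icc 0 1)
    (hε : ε ∈ Set.Icc 0 1) (hn : 2 ≤ n) (hsmall : 2 * log n ≤ 3 / 64 * (ε * n * r))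
    (hlabels : 2 * Fintype.card K * n + log n ≤ ((ε / 32) ^ 2) ^ 2 / 8 * n ^ 2 * r) :
    Pr n r (fun G ↦ ¬ UpperUniform K r ε G) ≤ 5 / n := by
  have hn0 : (0 : ℝ) < n := by positivity
  refine (Pr_le_add hr fun G hG ↦ exists_of_not_upperUniform hG).trans ?_
  have h₁ := (Pr_exists_small_le hr hε.1).trans
    (add_one_pow_sub_one_mul_le hn (exp_pos _).le (natCast_mul_exp_neg_le (by omega) hsmall))
  have h₂ := Pr_exists_labels_le (n := n) (K := K) (γ := (ε / 32) ^ 2) hr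
    ⟨sq_nonneg _, by nlinarith [hε.1, hε.2]⟩
  have h₃ : exp (2 * Fintype.card K * n - ((ε / 32) ^ 2) ^ 2 / 8 * n ^ 2 * r) ≤ 1 / n := by
    rw [one_div, ← exp_log hn0, ← exp_neg, exp_log hn0]
    exact exp_le_exp.2 (by linarith)
  calc _ ≤ 4 / (n : ℝ) + 1 / n := add_le_add h₁ (h₂.trans h₃)
    _ = 5 / n := by ring

end Tails

/-! ### Subgraphs of `G \ H` -/

section Subgraph

open Finset

variable {n : ℕ} {p δ ε r : ℝ} {G H R : SimpleGraph (Fin n)}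

theorem deg_sdiff_add_deg [Finite V] {G H : SimpleGraph V} (hHG : H ≤ G) (v : V) :
    deg (G \ H) v + deg H v = deg G v := by
  have hN : (G \ H).neighborSet v = G.neighborSet v \ H.neighborSet v := by
    ext
    simp
  rw [deg, deg, deg, hN]
  exact Set.ncard_sdiff_add_ncard_of_subset fun w hw ↦ hHG hw

theorem deg_top [Fintype V] (v : V) : deg (⊤ : SimpleGraph V) v = Fintype.card V - 1 := by
  rw [deg, SimpleGraph.neighborSet_top, Set.ncard_compl, Set.ncard_singleton,
    Nat.card_eq_fintype_card]

theorem two_mul_ncard_edgeSet [Fintype V] (G : SimpleGraph V) :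
    2 * G.edgeSet.ncard = adjPairs G univ := by
  classical
  rw [← univ_product_univ, adjPairs_product_univ, ← SimpleGraph.coe_edgeFinset,
    Set.ncard_coe_finset, ← SimpleGraph.sum_degrees_eq_twice_card_edges]
  refine sum_congr rfl fun v _ ↦ ?_
  rw [deg, Set.ncard_eq_toFinset_card', Set.toFinset_card, SimpleGraph.card_neighborSet_eq_degree]

theorem UpperUniform.ncard_edgeSet_le [Fintype V] {K : Type*} {G : SimpleGraph V} [Nonempty K]
    (hU : UpperUniform K r ε G) (hr : 0 ≤ r) (hε : ε ∈ Set.Icc 0 1) :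
    (G.edgeSet.ncard : ℝ) ≤ r * Fintype.card V ^ 2 := by
  have hlabels := hU.labels (fun _ ↦ Classical.arbitrary K) fun _ ↦ Set.univ
  simp only [Set.mem_univ, filter_true, ← two_mul_ncard_edgeSet, card_univ, Fintype.card_prod]
    at hlabels
  have hε32 : (ε / 32) ^ 2 ≤ 1 := by nlinarith [hε.1, hε.2]
  have := mul_le_mul_of_nonneg_right hε32 (by positivity : 0 ≤ r * (Fintype.card V : ℝ) ^ 2)
  push_cast at hlabels
  linarith

/-- From index `n / 2` on, the degrees are bounded by the last one that is controlled directly. -/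
theorem PosaFamily.exists_perm_deg_le (hH : PosaFamily n p ε H) (hp : 0 ≤ p) (hn : 3 ≤ n) :
    ∃ e : Equiv.Perm (Fin n), ∀ i : Fin n,
      (deg H (e i) : ℝ) ≤ (n - min ((i : ℝ) + 1) (n / 2) + 1) * p - ε * n * p := by
  obtain ⟨v, hv, hanti, hdeg⟩ := hH
  refine ⟨.ofBijective v hv, fun i ↦ ?_⟩
  rw [Equiv.ofBijective_apply]
  rcases lt_or_ge ((i : ℝ) + 1) (n / 2) with hi | hi
  · rw [min_eq_left hi.le]
    linarith [hdeg i hi]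
  · obtain ⟨j, hj, hjn⟩ : ∃ j : ℕ, 2 * (j + 1) < n ∧ n ≤ 2 * (j + 1) + 2 :=
      ⟨(n + 1) / 2 - 2, by omega, by omega⟩
    have hj' : (2 * (j + 1) : ℝ) < n := by exact_mod_cast hj
    have hjn' : (n : ℝ) ≤ 2 * (j + 1) + 2 := by exact_mod_cast hjn
    have hji : j ≤ i := by
      have : (j : ℝ) ≤ i := by linarith
      exact_mod_cast this
    have hmono : (deg H (v i) : ℝ) ≤ deg H (v ⟨j, by omega⟩) := mod_cast hanti ⟨j, _⟩ i hji
    have hlast := hdeg ⟨j, by omega⟩ (by dsimp only; linarith)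
    rw [min_eq_right hi]
    nlinarith

theorem PosaFamily.exists_perm_le_deg_sdiff (hH : PosaFamily n p (2 * ε) H) (hHG : H ≤ G)
    (hp : 0 ≤ p) (hε : ε ∈ Set.Icc 0 1) (hεn : 16 ≤ ε * n)
    (hG : ∀ v, (1 - ε / 4) * p * (n - 1) ≤ deg G v) :
    ∃ e : Equiv.Perm (Fin n), ∀ i : Fin n,
      p * (min ((i : ℝ) + 1) (n / 2) + 3 / 2 * (ε * n)) ≤ deg (G \ H) (e i) := by
  have hn : (16 : ℝ) ≤ n := hεn.trans (mul_le_of_le_one_left (Nat.cast_nonneg n) hε.2)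
  obtain ⟨e, he⟩ := hH.exists_perm_deg_le hp (by norm_cast at hn; omega)
  refine ⟨e, fun i ↦ ?_⟩
  have hadd : (deg (G \ H) (e i) : ℝ) + deg H (e i) = deg G (e i) := by
    exact_mod_cast deg_sdiff_add_deg hHG (e i)
  have := hG (e i)
  have := he i
  have : 0 ≤ p * ε := mul_nonneg hp hε.1
  have := mul_le_mul_of_nonneg_left hεn hp
  linarith

theorem posaDegrees_of_le_deg (hr : 0 < r) (e : Equiv.Perm (Fin n))
    (he : ∀ i : Fin n, r * (min ((i : ℝ) + 1) (n / 2) + ε * n) ≤ deg R (e i)) :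
    PosaDegrees r ε R := by
  intro s hs hsn
  rw [Fintype.card_fin] at hsn
  rw [Fintype.card_fin, ← Nat.le_floor_iff hs, ← card_range ⌊s⌋₊]
  refine card_le_card_of_injOn (fun w ↦ (e.symm w : ℕ)) (fun w hw ↦ ?_)
    fun w _ w' _ h ↦ e.symm.injective (Fin.ext h)
  have hlow := he (e.symm w)
  rw [e.apply_symm_apply] at hlow
  have hmin := lt_of_mul_lt_mul_left (hlow.trans_lt (mem_filter.1 hw).2) hr.le
  rcases min_lt_iff.1 (lt_of_add_lt_add_right hmin) with h | h
  · rw [mem_coe, mem_range, ← Nat.succ_le_iff, Nat.le_floor_iff hs]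
    push_cast
    exact h.le
  · exact absurd h hsn.not_gt

theorem posaDegrees_of_mul_deg_le (hp : 0 < p) (hδ : 0 < δ) (hε : ε ∈ Set.Icc 0 1)
    (e : Equiv.Perm (Fin n))
    (he : ∀ i : Fin n, p * (min ((i : ℝ) + 1) (n / 2) + 3 / 2 * (ε * n)) ≤ deg G (e i))
    (hR : ∀ v, (1 - ε / 4) * δ * deg G v ≤ deg R v) : PosaDegrees (p * δ) ε R := by
  refine posaDegrees_of_le_deg (mul_pos hp hδ) e fun i ↦ ?_
  obtain ⟨hε0, hε1⟩ := hε
  set m := min ((i : ℝ) + 1) (n / 2)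
  have hmn : m ≤ n / 2 := min_le_right _ _
  have hmain : m + ε * n ≤ (1 - ε / 4) * (m + 3 / 2 * (ε * n)) := by
    have := mul_le_mul_of_nonneg_left hmn hε0
    have := mul_le_mul_of_nonneg_right hε1 (by positivity : 0 ≤ ε * n)
    linarith
  calc p * δ * (m + ε * n) ≤ p * δ * ((1 - ε / 4) * (m + 3 / 2 * (ε * n))) := by gcongr
    _ = (1 - ε / 4) * δ * (p * (m + 3 / 2 * (ε * n))) := by ring
    _ ≤ (1 - ε / 4) * δ * deg G (e i) := by
        have : 0 ≤ 1 - ε / 4 := by linarith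
        gcongr
        exact he i
    _ ≤ deg R (e i) := hR (e i)

theorem exists_upperUniform_posaDegrees {K : Type*} (hH : PosaFamily n p (2 * ε) H) (hHG : H ≤ G)
    (hp : 0 < p) (hδ : δ ∈ Set.Ioc 0 1) (hε : ε ∈ Set.Icc 0 1) (hεn : 16 ≤ ε * n)
    (hlog : 2 ^ 9 * log n ≤ ε ^ 3 * (n * (p * δ)))
    (hG : ∀ v, (1 - ε / 4) * p * (n - 1) ≤ deg G v)
    (hU : Pr n δ (fun Q ↦ ¬ UpperUniform K (p * δ) ε (G ⊓ Q)) < 1 / 2) :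
    ∃ R ≤ G \ H, UpperUniform K (p * δ) ε R ∧ PosaDegrees (p * δ) ε R := by
  obtain ⟨hδ0, hδ1⟩ := hδ
  obtain ⟨hε0, hε1⟩ := hε
  have hδ' : δ ∈ Set.Icc 0 1 := ⟨hδ0.le, hδ1⟩
  have hn : (16 : ℝ) ≤ n := hεn.trans (mul_le_of_le_one_left (Nat.cast_nonneg n) hε1)
  obtain ⟨e, he⟩ := hH.exists_perm_le_deg_sdiff hHG hp.le ⟨hε0, hε1⟩ hεn hG
  have hmin : ∀ v, p * (3 / 2 * (ε * n)) ≤ deg (G \ H) v := fun v ↦ by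
    rw [← e.apply_symm_apply v]
    refine le_trans ?_ (he (e.symm v))
    gcongr
    exact le_add_of_nonneg_left (by positivity)
  have hdeg : Pr n δ (fun Q ↦ ∃ v, (deg ((G \ H) ⊓ Q) v : ℝ) <
      (1 - ε / 4) * δ * deg (G \ H) v) ≤ 1 / n := by
    refine (Pr_exists_deg_inf_lt_le hδ' ⟨by positivity, by linarith⟩ hmin).trans
      (natCast_mul_exp_neg_le (by norm_cast at hn; omega) ?_)
    linarith [log_natCast_nonneg n]
  obtain ⟨Q, hQU, hQdeg⟩ : ∃ Q, UpperUniform K (p * δ) ε (G ⊓ Q) ∧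
      ∀ v, (1 - ε / 4) * δ * deg (G \ H) v ≤ deg ((G \ H) ⊓ Q) v := by
    by_contra! hnone
    have := one_le_Pr_add_Pr hδ' fun Q ↦ or_iff_not_imp_left.2 fun hQ ↦ hnone Q (not_not.1 hQ)
    have : 1 / (n : ℝ) ≤ 1 / 16 := by gcongr
    linarith
  exact ⟨(G \ H) ⊓ Q, inf_le_left, hQU.mono (inf_le_inf_right _ sdiff_le),
    posaDegrees_of_mul_deg_le hp hδ0 ⟨hε0, hε1⟩ e he hQdeg⟩

theorem Pr_exists_deg_lt_le (hp : p ∈ Set.Icc 0 1) (hε : ε ∈ Set.Icc 0 1) (hn : 2 ≤ n)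
    (hlog : 2 ^ 9 * log n ≤ ε ^ 2 * (n * p)) :
    Pr n p (fun G ↦ ∃ v, (deg G v : ℝ) < (1 - ε / 4) * p * (n - 1)) ≤ 1 / n := by
  have hdeg : ∀ v : Fin n, (deg ⊤ v : ℝ) = n - 1 := fun v ↦ by
    rw [deg_top, Fintype.card_fin, Nat.cast_pred (by omega)]
  have htail := Pr_exists_deg_inf_lt_le hp (g := ε / 4)
    ⟨by linarith [hε.1], by linarith [hε.2]⟩ fun v ↦ (hdeg v).ge
  simp only [top_inf_eq, hdeg] at htail
  refine htail.trans (natCast_mul_exp_neg_le (by omega) ?_)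
  have hn' : (2 : ℝ) ≤ n := by exact_mod_cast hn
  have := mul_le_mul_of_nonneg_left hn' (mul_nonneg (sq_nonneg ε) hp.1)
  linarith

theorem Pr_half_le_Pr_not_upperUniform_le {c k : ℕ} (hp : p ∈ Set.Icc 0 1)
    (hδ : δ ∈ Set.Icc 0 1) (hε : ε ∈ Set.Icc 0 1) (hn : 2 ≤ n) (hlogn : 1 ≤ log n)
    (hk : k ≤ c * log n) (hlog : 2 ^ 23 * (16 * c + 17) * log n ≤ ε ^ 4 * (n * (p * δ))) :
    Pr n p (fun G ↦ 1 / 2 ≤ Pr n δ fun Q ↦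
      ¬ UpperUniform (Fin (k + 1) × Set (Option Bool)) (p * δ) ε (G ⊓ Q)) ≤ 10 / n := by
  have hr : p * δ ∈ Set.Icc 0 1 :=
    ⟨mul_nonneg hp.1 hδ.1, mul_le_one₀ hp.2 hδ.1 hδ.2⟩
  have hX : 0 ≤ n * (p * δ) := mul_nonneg (Nat.cast_nonneg n) hr.1
  have hsmall : 2 * log n ≤ 3 / 64 * (ε * n * (p * δ)) := by
    have := mul_le_mul_of_nonneg_right
      (pow_le_of_le_one hε.1 hε.2 four_ne_zero) hX
    have : 0 ≤ c * log n := by positivity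
    linarith
  have hlabels : 2 * Fintype.card (Fin (k + 1) × Set (Option Bool)) * n + log n ≤
      ((ε / 32) ^ 2) ^ 2 / 8 * n ^ 2 * (p * δ) := by
    have hcard : Fintype.card (Fin (k + 1) × Set (Option Bool)) = (k + 1) * 8 := by simp
    have hn' : (1 : ℝ) ≤ n := by exact_mod_cast (by omega : 1 ≤ n)
    rw [hcard]
    push_cast
    calc 2 * ((k + 1) * 8) * n + log n ≤ 2 * ((c * log n + log n) * 8) * n + n * log n := by
          gcongr
          exact le_mul_of_one_le_left (by positivity) hn'
      _ = (16 * c + 17) * log n * n := by ring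
      _ ≤ ε ^ 4 * (n * (p * δ)) / 2 ^ 23 * n := by
          gcongr
          linarith
      _ = _ := by ring
  calc _ ≤ 2 * Pr n (p * δ) fun G ↦ ¬ UpperUniform _ (p * δ) ε G := Pr_half_le_Pr_inf_le hp hδ _
    _ ≤ 2 * (5 / n) := by
        gcongr
        exact Pr_not_upperUniform_le hr hε hn hsmall hlabels
    _ = 10 / n := by ring

theorem le_Pr_forall_exists_upperUniform_posaDegrees {c k : ℕ} (hp : p ∈ Set.Ioc 0 1)
    (hδ : δ ∈ Set.Ioc 0 1) (hε : ε ∈ Set.Icc 0 1) (hεn : 16 ≤ ε * n) (hlogn : 1 ≤ log n)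
    (hk : k ≤ c * log n) (hlog : 2 ^ 23 * (16 * c + 17) * log n ≤ ε ^ 4 * (n * (p * δ))) :
    1 - 11 / n ≤ Pr n p fun G ↦ ∀ H ≤ G, PosaFamily n p (2 * ε) H → ∃ R ≤ G \ H,
      UpperUniform (Fin (k + 1) × Set (Option Bool)) (p * δ) ε R ∧ PosaDegrees (p * δ) ε R := by
  have hp' : p ∈ Set.Icc 0 1 := ⟨hp.1.le, hp.2⟩
  have hδ' : δ ∈ Set.Icc 0 1 := ⟨hδ.1.le, hδ.2⟩
  have hn : 2 ≤ n := by
    have : (16 : ℝ) ≤ n := hεn.trans (mul_le_of_le_one_left (Nat.cast_nonneg n) hε.2)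
    norm_cast at this
    omega
  have hlog₃ : 2 ^ 9 * log n ≤ ε ^ 3 * (n * (p * δ)) := by
    have hpow : ε ^ 4 ≤ ε ^ 3 := pow_le_pow_of_le_one hε.1 hε.2 (by norm_num)
    have hp0 := hp.1
    have hδ0 := hδ.1
    have : ε ^ 4 * (n * (p * δ)) ≤ ε ^ 3 * (n * (p * δ)) := by gcongr
    have : 0 ≤ c * log n := by positivity
    linarith
  have hlog₂ : 2 ^ 9 * log n ≤ ε ^ 2 * (n * p) := by
    have hpow : ε ^ 3 ≤ ε ^ 2 := pow_le_pow_of_le_one hε.1 hε.2 (by norm_num)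
    have hp0 := hp.1
    have hδ0 := hδ.1
    have hpδ : p * δ ≤ p := mul_le_of_le_one_right hp.1.le hδ.2
    exact hlog₃.trans (by gcongr)
  have hdeg := Pr_exists_deg_lt_le hp' hε hn hlog₂
  have huniform := Pr_half_le_Pr_not_upperUniform_le hp' hδ' hε hn hlogn hk hlog
  calc 1 - 11 / (n : ℝ) = 1 - 1 / n - 10 / n := by ring
    _ ≤ 1 - Pr n p _ - Pr n p _ := sub_le_sub (sub_le_sub_left hdeg 1) huniform
    _ ≤ _ := one_sub_sub_le_Pr hp' fun G hG hU H hHG hH ↦ by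
      push Not at hG hU
      exact exists_upperUniform_posaDegrees hH hHG hp.1 hδ hε hεn hlog₃ hG hU

end Subgraph

theorem natLog_two_le_two_mul_log (n : ℕ) : (Nat.log 2 n : ℝ) ≤ 2 * log n :=
  calc (Nat.log 2 n : ℝ) ≤ log n / log 2 := natLog_le_logb n 2
    _ ≤ 2 * log n := by
      rw [div_le_iff₀ (log_pos one_lt_two)]
      nlinarith [log_natCast_nonneg n, log_two_gt_d9]

theorem eventually_mul_natLog_le {a b : ℝ} (ha : 0 < a) (hb : 0 < b) :
    ∀ᶠ n : ℕ in atTop, a * Nat.log 2 n ≤ b * n := by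
  have hlog := (isLittleO_log_id_atTop.comp_tendsto tendsto_natCast_atTop_atTop).def
    (c := b / (2 * a)) (by positivity)
  filter_upwards [hlog] with n hn
  simp only [Function.comp_apply, id_eq, norm_eq_abs, Nat.abs_cast] at hn
  calc a * Nat.log 2 n ≤ a * (2 * (b / (2 * a) * n)) := by
        gcongr
        exact (natLog_two_le_two_mul_log n).trans (by linarith [le_abs_self (log n)])
    _ = b * n := by field_simp

theorem Rounds.of_natLog_le {ε : ℝ} {c n t₂ : ℕ} (hc : 16 ≤ c * ε) (ht₂ : 2 ≤ t₂ * ε)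
    (hlog : 1 + t₂ ≤ Nat.log 2 n) (hn : (2 * c + 2 : ℝ) * Nat.log 2 n ≤ ε / 8 * n) :
    Rounds ε n (c * Nat.log 2 n) (n / (c * Nat.log 2 n) + 1) (Nat.log 2 n + 1) t₂ := by
  set l := Nat.log 2 n
  have hc0 : 0 < c := Nat.pos_of_ne_zero fun h ↦ by norm_num [h] at hc
  have hl0 : 0 < l := by omega
  refine ⟨Nat.succ_pos _, (Nat.lt_mul_div_succ n (Nat.mul_pos hc0 hl0)).le,
    Nat.lt_pow_succ_log_self one_lt_two n, ht₂, ?_⟩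
  have hL : ((n / (c * l) : ℕ) : ℝ) ≤ n / (c * l) := by
    exact_mod_cast Nat.cast_div_le (α := ℝ) (m := n) (n := c * l)
  have hlog' : (1 + t₂ : ℝ) ≤ l := by exact_mod_cast hlog
  have hnc : (n : ℝ) / c ≤ ε / 16 * n := by
    rw [div_le_iff₀ (by positivity)]
    nlinarith [(Nat.cast_nonneg n : (0 : ℝ) ≤ n)]
  push_cast
  calc 2 * (c * l : ℝ) + (l + 1 + t₂) * ((n / (c * l) : ℕ) + 1)
    _ ≤ 2 * (c * l) + 2 * l * (n / (c * l) + 1) := by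
        gcongr
        linarith
    _ = (2 * c + 2) * l + 2 * (n / c) := by
        field_simp
        ring
    _ ≤ ε / 4 * n := by linarith

theorem eventually_exists_rounds {ε : ℝ} (hε : 0 < ε) : ∃ c : ℕ, ∀ᶠ n : ℕ in atTop,
    ∃ k L t₁ t₂, Rounds ε n k L t₁ t₂ ∧ (k : ℝ) ≤ c * log n := by
  obtain ⟨c, hc⟩ := exists_nat_ge (16 / ε)
  obtain ⟨t₂, ht₂⟩ := exists_nat_ge (2 / ε)
  rw [div_le_iff₀ hε] at hc ht₂
  refine ⟨2 * c, ?_⟩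
  filter_upwards [eventually_ge_atTop (2 ^ (1 + t₂)),
    eventually_mul_natLog_le (by positivity : (0 : ℝ) < 2 * c + 2) (by positivity : 0 < ε / 8)]
    with n hn hlog
  refine ⟨_, _, _, _, .of_natLog_le hc ht₂ (Nat.le_log_of_pow_le one_lt_two hn) hlog, ?_⟩
  push_cast
  linarith [mul_le_mul_of_nonneg_left (natLog_two_le_two_mul_log n) (Nat.cast_nonneg c)]

/-- Lemma 4.9.  For all `0 < ε, δ ≤ 1` there exists `C > 0` such
that, for `p ≥ C log n / n`, a.a.s. for every `H ∈ H^{2ε}_{n,p}(G)` the graph `G ∖ H`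
contains a subgraph with at most `δn²p` edges satisfying `RE(1/2 + ε/4)`. -/
theorem sparse_RE_subgraph (ε δ : ℝ) (hε : 0 < ε) (hε1 : ε ≤ 1) (hδ : 0 < δ)
    (hδ1 : δ ≤ 1) :
    ∃ C : ℝ, 0 < C ∧ ∀ η : ℝ, 0 < η → ∃ N : ℕ, ∀ n : ℕ, N ≤ n →
      ∀ p : ℝ, C * Real.log n / n ≤ p → p ≤ 1 →
        1 - η ≤ Pr n p (fun G =>
          ∀ H : SimpleGraph (Fin n), H ≤ G → PosaFamily n p (2 * ε) H →
            ∃ R : SimpleGraph (Fin n), R ≤ G \ H ∧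
              (R.edgeSet.ncard : ℝ) ≤ δ * n^2 * p ∧ RE n (1/2 + ε/4) R) := by
  obtain ⟨c, hrounds⟩ := eventually_exists_rounds hε
  have hε' : ε ∈ Set.Icc 0 1 := ⟨hε.le, hε1⟩
  have hcast := tendsto_natCast_atTop_atTop (R := ℝ)
  refine ⟨2 ^ 23 * (16 * c + 17) / (ε ^ 4 * δ), by positivity,
    fun η hη ↦ eventually_atTop.1 ?_⟩
  filter_upwards [hrounds, (hcast.const_mul_atTop hε).eventually_ge_atTop 16,
    (hcast.const_mul_atTop hη).eventually_ge_atTop 11,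
    (tendsto_log_atTop.comp hcast).eventually_ge_atTop 1, eventually_gt_atTop 0]
    with n ⟨k, L, t₁, t₂, hround, hk⟩ hεn hηn hlogn hn p hpC hp1
  have : NeZero n := ⟨hn.ne'⟩
  have hp : 0 < p := hpC.trans_lt' (by positivity [lt_of_lt_of_le one_pos hlogn])
  have hlog : 2 ^ 23 * (16 * c + 17) * log n ≤ ε ^ 4 * (n * (p * δ)) := by
    rw [div_mul_eq_mul_div, div_div, div_le_iff₀ (by positivity)] at hpC
    linarith
  calc 1 - η ≤ 1 - 11 / n := sub_le_sub_left ((div_le_iff₀ (by positivity)).2 hηn) 1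
    _ ≤ _ := le_Pr_forall_exists_upperUniform_posaDegrees ⟨hp, hp1⟩ ⟨hδ, hδ1⟩ hε' hεn hlogn hk hlog
    _ ≤ _ := Pr_mono ⟨hp.le, hp1⟩ fun G hG H hHG hH ↦ by
      obtain ⟨R, hR, hU, hD⟩ := hG H hHG hH
      have hedges := hU.ncard_edgeSet_le (by positivity) hε'
      rw [Fintype.card_fin] at hedges
      exact ⟨R, hR, hedges.trans (by linarith), hU.re hD (mul_pos hp hδ) hε hε1 hround⟩

end Resilience
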